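/- arXiv:math/0011181 — 3 statements merged into one kernel-verified Lean document; each statement's English description precedes it below -/
import Mathlib

section
/- Let R = k[x_1,...,x_n] be a polynomial ring over a field k, and let I ⊆ R be an ideal of height h. Then every associated prime of the local cohomology module H^h_I(R) is a minimal prime of I. -/
open MvPolynomial

/-- The height of an ideal: the infimum of the heights (in the prime spectrum) of the
minimal primes over it. -/
noncomputable def idealHeight {R : Type*} [CommRing R] (I : Ideal R) : ℕ∞ :=
  ⨅ p : {p : Ideal R // p ∈ I.minimalPrimes},
    Order.height (⟨p.1, p.2.1.1⟩ : PrimeSpectrum R)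


section
open CategoryTheory Limits Abelian

theorem lc_homology_rep {R : Type} [CommRing R] (K : CochainComplex (ModuleCat.{0} R) ℕ) (n : ℕ)
    (x : K.homology n) : ∃ f : K.X n, K.d n (n+1) f = 0 ∧
      ∀ r : R, r • x = 0 ↔ ∃ g : K.X ((ComplexShape.up ℕ).prev n),
        K.d ((ComplexShape.up ℕ).prev n) n g = r • f := by
  obtain ⟨z, rfl⟩ := (ModuleCat.epi_iff_surjective (K.homologyπ n)).1 inferInstance x
  have hinj := (ModuleCat.mono_iff_injective (K.iCycles n)).1 inferInstance
  refine ⟨K.iCycles n z, ?_, fun r => ?_⟩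
  · rw [← ConcreteCategory.comp_apply, K.iCycles_d]; rfl
  · have hex : (ShortComplex.mk _ _ (K.toCycles_comp_homologyπ
      ((ComplexShape.up ℕ).prev n) n)).Exact :=
      ShortComplex.exact_of_g_is_cokernel _ (K.homologyIsCokernel _ n rfl)
    rw [ShortComplex.moduleCat_exact_iff] at hex
    rw [← map_smul]
    constructor
    · intro h
      obtain ⟨g, hg⟩ := hex _ h
      refine ⟨g, ?_⟩
      rw [← map_smul, ← hg, ← K.toCycles_i]; rfl
    · rintro ⟨g, hg⟩
      rw [← K.toCycles_i, ConcreteCategory.comp_apply, ← map_smul] at hg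
      rw [← hinj hg, ← ConcreteCategory.comp_apply, K.toCycles_comp_homologyπ]; rfl

theorem lc_extMk_zero_iff {C : Type*} [Category C] [Abelian C] [HasExt.{0} C]
    {X Y : C} (P : ProjectiveResolution X) (f : P.complex.X 0 ⟶ Y)
    (hf : P.complex.d 1 0 ≫ f = 0) : P.extMk f 1 rfl hf = 0 ↔ f = 0 := by
  refine ⟨fun h => ?_, fun h => by subst h; simp⟩
  rw [← P.extEquivCohomologyClass.apply_eq_iff_eq] at h
  simp only [ProjectiveResolution.extEquivCohomologyClass_extMk,
    ProjectiveResolution.extEquivCohomologyClass_zero,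
    CochainComplex.HomComplex.CohomologyClass.mk_eq_zero_iff] at h
  rw [CochainComplex.HomComplex.Cocycle.toSingleMk_mem_coboundaries_iff _ _ _ _ _ 1 (by lia)] at h
  obtain ⟨g, hg⟩ := h
  have : IsZero (P.cochainComplex.X 1) := P.cochainComplex.isZero_of_isStrictlyLE 0 1 (by lia)
  rw [this.eq_of_src g 0, comp_zero] at hg
  rw [← cancel_epi (P.cochainComplexXIso (-(0:ℕ)) 0 rfl).hom, ← hg, comp_zero]

/-- An element of the derived-functor `Ext` has the same annihilator as some element of
the derived-category `Ext`. -/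
theorem lc_ext_compare {R : Type} [CommRing R] (X Y : ModuleCat.{0} R) (n : ℕ)
    (x : ((Ext R (ModuleCat.{0} R) n).obj (Opposite.op X)).obj Y) :
    ∃ y : Abelian.Ext X Y n, ∀ r : R, r • x = 0 ↔ r • y = 0 := by
  let P := ProjectiveResolution.of X
  let e := P.isoExt (R := R) n Y
  obtain ⟨f, hf, hr⟩ := lc_homology_rep _ n (e.hom x)
  let f' : P.complex.X n ⟶ Y := f
  have hf' : P.complex.d (n+1) n ≫ f' = 0 := hf
  refine ⟨P.extMk f' (n+1) rfl hf', fun r => ?_⟩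
  have h1 : r • x = 0 ↔ r • e.hom x = 0 := by
    rw [← map_smul]
    have hi : Function.Injective e.hom := (ModuleCat.mono_iff_injective _).1 inferInstance
    exact (map_eq_zero_iff _ hi).symm
  have h2 : r • P.extMk f' (n+1) rfl hf' = P.extMk (r • f') (n+1) rfl (by simp [hf']) := by
    rw [Ext.smul_eq_comp_mk₀, P.extMk_comp_mk₀]
    congr 1
  rw [h1, hr, h2]
  cases n with
  | zero =>
    rw [lc_extMk_zero_iff]
    constructor
    · rintro ⟨g, hg⟩
      rw [HomologicalComplex.shape _ _ _ (by simp)] at hg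
      exact hg.symm
    · intro h
      exact ⟨0, by rw [map_zero]; exact h.symm⟩
  | succ p =>
    rw [P.extMk_eq_zero_iff _ _ _ _ p rfl, CochainComplex.prev_nat_succ]
    rfl

open RingTheory.Sequence in
theorem lc_ext_quot_vanish {R : Type} [CommRing R] (N M : ModuleCat.{0} R) (a : R)
    (ha : IsSMulRegular M a) (i : ℕ) (h0 : Subsingleton (Abelian.Ext N M i))
    (h1 : Subsingleton (Abelian.Ext N M (i+1))) :
    Subsingleton (Abelian.Ext N (ModuleCat.of R (QuotSMulTop a M)) i) := by
  have zero1 := AddCommGrpCat.isZero_of_iff_subsingleton.mpr h0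
  have zero2 := AddCommGrpCat.isZero_of_iff_subsingleton.mpr h1
  exact AddCommGrpCat.subsingleton_of_isZero <| ShortComplex.Exact.isZero_of_both_zeros
    ((Ext.covariant_sequence_exact₃' N ha.smulShortComplex_shortExact) i (i + 1) rfl)
    (zero1.eq_zero_of_src _) (zero2.eq_zero_of_tgt _)

open RingTheory.Sequence in
theorem lc_extend {R : Type} [CommRing R] [IsNoetherianRing R] (I : Ideal R)
    (M : ModuleCat.{0} R) [Module.Finite R M] (fs : List R)
    (hreg : IsWeaklyRegular M fs)
    (hext : ∀ i ≤ fs.length, Subsingleton (Abelian.Ext (ModuleCat.of R (R ⧸ I)) M i)) :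
    ∃ g ∈ I, IsWeaklyRegular M (fs ++ [g]) := by
  induction fs generalizing M with
  | nil =>
    have : Subsingleton (ModuleCat.of R (R ⧸ I) ⟶ M) :=
      Ext.addEquiv₀.subsingleton_congr.mp (hext 0 (by simp))
    have : Subsingleton ((R ⧸ I) →ₗ[R] M) := (ModuleCat.homAddEquiv
      (M := ModuleCat.of R (R ⧸ I)) (N := M)).symm.subsingleton
    obtain ⟨x, mem_ann, hx⟩ := IsSMulRegular.subsingleton_linearMap_iff.mp this
    rw [Ideal.annihilator_quotient] at mem_ann
    exact ⟨x, mem_ann, by simpa using (isWeaklyRegular_singleton_iff M x).2 hx⟩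
  | cons a fs ih =>
    rw [isWeaklyRegular_cons_iff] at hreg
    obtain ⟨g, hg, h⟩ := ih (ModuleCat.of R (QuotSMulTop a M)) hreg.2
      (fun i hi => lc_ext_quot_vanish _ M a hreg.1 i (hext i (by simp; omega))
        (hext (i+1) (by simpa using hi)))
    exact ⟨g, hg, IsWeaklyRegular.cons hreg.1 h⟩

open RingTheory.Sequence in
theorem lc_main_ext {R : Type} [CommRing R] (J p : Ideal R) (hp : p ≠ ⊤)
    (M : ModuleCat.{0} R) (fs : List R) (hfs : ∀ r ∈ fs, r ∈ J)
    (hreg : IsWeaklyRegular M fs)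
    (hext : ∀ i ≤ fs.length, Subsingleton (Abelian.Ext (ModuleCat.of R (R ⧸ p)) M i))
    (hextJ : ∀ i < fs.length, Subsingleton (Abelian.Ext (ModuleCat.of R (R ⧸ J)) M i))
    (y : Abelian.Ext (ModuleCat.of R (R ⧸ J)) M fs.length)
    (hy : ∀ r : R, r • y = 0 ↔ r ∈ p) : False := by
  induction fs generalizing M with
  | nil =>
    have : Subsingleton (ModuleCat.of R (R ⧸ p) ⟶ M) :=
      Ext.addEquiv₀.subsingleton_congr.mp (hext 0 (by simp))
    have : Subsingleton ((R ⧸ p) →ₗ[R] M) := (ModuleCat.homAddEquiv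
      (M := ModuleCat.of R (R ⧸ p)) (N := M)).symm.subsingleton
    let φ : ModuleCat.of R (R ⧸ J) ⟶ M := Ext.linearEquiv₀ (R := R) y
    have hφ : ∀ r : R, r • φ = 0 ↔ r ∈ p := fun r => by
      rw [← hy]
      simp only [φ]
      rw [← map_smul]
      exact map_eq_zero_iff _ (Ext.linearEquiv₀ (R := R)).injective
    let m : M := φ.hom (Ideal.Quotient.mk J 1)
    have hm : p ≤ LinearMap.ker (LinearMap.toSpanSingleton R M m) := by
      intro r hr
      have := congrArg (fun ψ => ModuleCat.Hom.hom ψ (Ideal.Quotient.mk J 1)) ((hφ r).2 hr)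
      rw [LinearMap.mem_ker, LinearMap.toSpanSingleton_apply]
      exact this
    have h0 := Subsingleton.elim (Submodule.liftQ p (LinearMap.toSpanSingleton R M m) hm) 0
    have hm0 : m = 0 := by
      have := LinearMap.congr_fun h0 (Submodule.Quotient.mk 1)
      rw [Submodule.liftQ_apply, LinearMap.toSpanSingleton_apply, one_smul] at this
      exact this
    apply hp
    rw [Ideal.eq_top_iff_one, ← hφ, one_smul]
    ext
    have key : ∀ q : R ⧸ J, φ.hom q = 0 := fun q => by
      obtain ⟨s, rfl⟩ := Ideal.Quotient.mk_surjective q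
      have : Ideal.Quotient.mk J s = s • Ideal.Quotient.mk J 1 := by
        rw [← Ideal.Quotient.mk_eq_mk, ← Ideal.Quotient.mk_eq_mk, ← Submodule.Quotient.mk_smul]; simp
      rw [this]
      exact (map_smul φ.hom s _).trans (by rw [show φ.hom (Ideal.Quotient.mk J 1) = 0 from hm0, smul_zero])
    exact key _
  | cons a fs ih =>
    rw [isWeaklyRegular_cons_iff] at hreg
    have hS := hreg.1.smulShortComplex_shortExact
    have haJ : a ∈ Module.annihilator R (ModuleCat.of R (R ⧸ J)) := by
      change a ∈ Module.annihilator R (R ⧸ J)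
      rw [Ideal.annihilator_quotient]; exact hfs a (by simp)
    obtain ⟨z, hz⟩ := Ext.covariant_sequence_exact₁ (ModuleCat.of R (R ⧸ J)) hS y
      (by
        have := Ext.postcomp_smul_id_eq_zero_of_mem_annihilator (M := M) haJ (a :: fs).length
        exact congrArg (fun ψ => ψ.hom y) this) (n₀ := fs.length) rfl
    refine ih (ModuleCat.of R (QuotSMulTop a M)) (fun r hr => hfs r (by simp [hr])) hreg.2
      (fun i hi => lc_ext_quot_vanish _ M a hreg.1 i (hext i (by simp; omega))
        (hext (i+1) (by simpa using hi)))
      (fun i hi => lc_ext_quot_vanish _ M a hreg.1 i (hextJ i (by simp; omega))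
        (hextJ (i+1) (by simpa using hi))) z (fun r => ?_)
    have hzr : r • y = (r • z).comp hS.extClass rfl := by
      rw [Ext.smul_comp]; exact congrArg (r • ·) hz.symm
    rw [← hy, hzr]
    constructor
    · intro h
      have h' : r • z = 0 := h
      rw [h']; simp; rfl
    · intro h
      obtain ⟨w, hw⟩ := Ext.covariant_sequence_exact₃ (ModuleCat.of R (R ⧸ J)) hS (r • z) rfl h
      have : Subsingleton (Abelian.Ext (ModuleCat.of R (R ⧸ J)) M fs.length) :=
        hextJ fs.length (by simp)
      have hw0 : w = 0 := this.elim _ _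
      rw [hw0] at hw
      have hw' : r • z = 0 := by rw [← hw]; simp
      exact hw'

open RingTheory.Sequence in
theorem lc_ext_of_weak {A : Type} [CommRing A] [IsNoetherianRing A] (J : Ideal A) (hJ : J ≠ ⊤)
    (rs : List A) (hrs : ∀ r ∈ rs, r ∈ J) (hreg : IsWeaklyRegular A rs) (i : ℕ)
    (hi : i < rs.length) :
    Subsingleton (Abelian.Ext (ModuleCat.of A (A ⧸ J)) (ModuleCat.of A A) i) := by
  have hJ' : J • (⊤ : Submodule A A) ≠ ⊤ := by simpa using hJ
  have hle : Ideal.ofList rs ≤ J := Ideal.span_le.2 (fun r hr => hrs r hr)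
  have hreg' : IsRegular A rs := by
    have h2 : (Ideal.ofList rs • ⊤ : Submodule A A) ≤ J • ⊤ := by simpa using hle
    exact ⟨hreg, fun h => hJ' (top_le_iff.1 (h.le.trans h2))⟩
  have : Module.Finite A (ModuleCat.of A (A ⧸ J)) :=
    inferInstanceAs (Module.Finite A (A ⧸ J))
  have : Module.Finite A (ModuleCat.of A A) := inferInstanceAs (Module.Finite A A)
  refine ModuleCat.subsingleton_ext_of_exists_isRegular J (ModuleCat.of A (A ⧸ J)) ?_
    (ModuleCat.of A A) (lt_top_iff_ne_top.2 hJ') rs hrs hreg' i hi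
  · change Module.support A (A ⧸ J) ⊆ _
    rw [Module.support_eq_zeroLocus, Ideal.annihilator_quotient]

open RingTheory.Sequence in
def LcCM (A : Type) [CommRing A] : Prop :=
  ∀ P : Ideal A, P.IsPrime → ∃ rs : List A, (∀ r ∈ rs, r ∈ P) ∧ IsWeaklyRegular A rs ∧
    (rs.length : ℕ∞) = P.height

theorem LcCM.ext {A : Type} [CommRing A] [IsNoetherianRing A] (hA : LcCM A) (P : Ideal A)
    (hP : P.IsPrime) (i : ℕ) (hi : (i : ℕ∞) < P.height) :
    Subsingleton (Abelian.Ext (ModuleCat.of A (A ⧸ P)) (ModuleCat.of A A) i) := by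
  obtain ⟨rs, h1, h2, h3⟩ := hA P hP
  refine lc_ext_of_weak P hP.ne_top rs h1 h2 i ?_
  rw [← h3] at hi
  exact_mod_cast hi

open RingTheory.Sequence in
theorem LcCM.height_le {A : Type} [CommRing A] [IsNoetherianRing A] (hA : LcCM A)
    (rs : List A) (hreg : IsWeaklyRegular A rs) (q : Ideal A)
    (hq : q ∈ associatedPrimes A (A ⧸ (Ideal.ofList rs • ⊤ : Submodule A A))) :
    q.height ≤ rs.length := by
  by_contra! hlt
  rw [AssociatedPrimes.mem_iff, isAssociatedPrime_iff] at hq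
  obtain ⟨hqp, x, hx⟩ := hq
  have : Module.Finite A (ModuleCat.of A A) := inferInstanceAs (Module.Finite A A)
  obtain ⟨g, hg, hreg'⟩ := lc_extend q (ModuleCat.of A A) rs hreg
    (fun i hi => hA.ext q hqp i (lt_of_le_of_lt (by exact_mod_cast hi) hlt))
  have h2 := ((isWeaklyRegular_append_iff A rs [g]).1 hreg').2
  rw [isWeaklyRegular_singleton_iff] at h2
  have hgx : g • x = 0 := by
    rw [hx, Submodule.mem_colon_singleton] at hg
    simpa using hg
  have hx0 : x = 0 := h2 (by simpa using hgx)
  apply hqp.ne_top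
  rw [hx, hx0]; simp

open RingTheory.Sequence in
theorem LcCM.grade {A : Type} [CommRing A] [IsNoetherianRing A] (hA : LcCM A)
    (J : Ideal A) (h : ℕ) (hJ : ∀ q : Ideal A, q.IsPrime → J ≤ q → (h : ℕ∞) ≤ q.height) :
    ∃ rs : List A, (∀ r ∈ rs, r ∈ J) ∧ rs.length = h ∧ IsWeaklyRegular A rs := by
  induction h with
  | zero => exact ⟨[], by simp, rfl, .nil A A⟩
  | succ h ih =>
    obtain ⟨rs, h1, h2, h3⟩ := ih (fun q hq hJq => le_trans (by simp) (hJ q hq hJq))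
    by_cases hs : Subsingleton ((A ⧸ J) →ₗ[A] (A ⧸ (Ideal.ofList rs • ⊤ : Submodule A A)))
    · obtain ⟨g, hg, hgr⟩ := IsSMulRegular.subsingleton_linearMap_iff.mp hs
      rw [Ideal.annihilator_quotient] at hg
      refine ⟨rs ++ [g], ?_, by simp [h2], ?_⟩
      · intro r hr
        rcases List.mem_append.1 hr with hr | hr
        · exact h1 r hr
        · rw [List.mem_singleton.1 hr]; exact hg
      · exact (isWeaklyRegular_append_iff A rs [g]).2
          ⟨h3, (isWeaklyRegular_singleton_iff _ _).2 hgr⟩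
    · exfalso
      rw [not_subsingleton_iff_nontrivial] at hs
      obtain ⟨f, hf⟩ := exists_ne (0 : (A ⧸ J) →ₗ[A] (A ⧸ (Ideal.ofList rs • ⊤ : Submodule A A)))
      have : ∃ z, f z ≠ 0 := by
        by_contra! hz
        exact hf (LinearMap.ext hz)
      obtain ⟨z, hz⟩ := this
      obtain ⟨q, hq, hqz⟩ := exists_le_isAssociatedPrime_of_isNoetherianRing A (f z) hz
      have hle := hA.height_le rs h3 q hq
      have hJq : J ≤ q := by
        intro r hr
        apply hqz
        rw [Submodule.mem_colon_singleton, ← map_smul]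
        have : r • z = 0 := by
          have h' : r ∈ Module.annihilator A (A ⧸ J) := by rwa [Ideal.annihilator_quotient]
          exact Module.mem_annihilator.1 h' z
        rw [this]; simp
      have := (hJ q hq.1 hJq).trans hle
      rw [h2] at this
      have : h + 1 ≤ h := by exact_mod_cast this
      omega

section
open Polynomial Ideal IsLocalization

theorem lc_height_quot {R : Type*} [CommRing R] [IsNoetherianRing R] (p : Ideal R) [p.IsMaximal]
    (P : Ideal R[X]) [P.IsPrime] [P.LiesOver p] : P.height ≤ p.height + 1 := by
  let _ : Field (R ⧸ p) := Quotient.field p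
  rw [height_eq_height_add_of_liesOver_of_hasGoingDown p]
  gcongr
  let e : (R[X] ⧸ (p.map (algebraMap R R[X]))) ≃+* (R ⧸ p)[X] :=
    (polynomialQuotientEquivQuotientPolynomial p).symm
  rw [← e.height_map]
  have hne : P.map (Ideal.Quotient.mk <| p.map (algebraMap R R[X])) ≠ ⊤ := by
    have : (P.map (Ideal.Quotient.mk <| p.map (algebraMap R R[X]))).IsPrime := by
      refine Ideal.map_isPrime_of_surjective Quotient.mk_surjective ?_
      rw [mk_ker, LiesOver.over (P := P) (p := p)]
      exact map_comap_le
    exact this.ne_top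
  have hne' : (P.map (Ideal.Quotient.mk <| p.map (algebraMap R R[X]))).map e ≠ ⊤ := by
    intro h
    apply hne
    have := congrArg (Ideal.comap e) h
    rwa [Ideal.comap_map_of_bijective _ e.bijective, Ideal.comap_top] at this
  have := Ideal.height_le_ringKrullDim_of_ne_top hne'
  rw [IsPrincipalIdealRing.ringKrullDim_eq_one _ (Polynomial.not_isField (R ⧸ p))] at this
  exact_mod_cast this

attribute [local instance] Polynomial.algebra Polynomial.isLocalization in
theorem lc_height_le {R : Type*} [CommRing R] [IsNoetherianRing R] (p : Ideal R)
    (P : Ideal R[X]) [P.IsPrime] [P.LiesOver p] : P.height ≤ p.height + 1 := by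
  have : p.IsPrime := by rw [P.over_def p]; infer_instance
  let Rₚ := Localization.AtPrime p
  set p' : Ideal Rₚ := p.map (algebraMap R Rₚ) with p'_def
  have : p'.IsMaximal := by
    rw [p'_def, Localization.AtPrime.map_eq_maximalIdeal]
    exact IsLocalRing.maximalIdeal.isMaximal Rₚ
  let P' : Ideal Rₚ[X] := P.map (algebraMap R[X] Rₚ[X])
  have disj : Disjoint (p.primeCompl.map Polynomial.C : Set R[X]) P := by
    refine Set.disjoint_left.mpr fun a ⟨b, hb⟩ ha ↦ hb.1 ?_
    rwa [SetLike.mem_coe, LiesOver.over (P := P) (p := p), mem_comap, Polynomial.algebraMap_eq, hb.2]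
  have : P'.IsPrime := isPrime_of_isPrime_disjoint (p.primeCompl.map Polynomial.C) Rₚ[X] P ‹_› disj
  have : P'.LiesOver p' := liesOver_of_isPrime_of_disjoint p.primeCompl _ _ disj
  have eq1 : p.height = p'.height := by
    rw [height_map_of_disjoint p.primeCompl]
    exact Disjoint.symm <| Set.disjoint_left.mpr fun _ a b ↦ b a
  have eq2 : P.height = P'.height := by
    rw [height_map_of_disjoint (Submonoid.map Polynomial.C <| p.primeCompl) _ disj]
  rw [eq1, eq2]
  apply lc_height_quot p' P'

theorem lc_height_map {R : Type*} [CommRing R] [IsNoetherianRing R] (p : Ideal R)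
    [(p.map (Polynomial.C : R →+* R[X])).LiesOver p] [p.IsPrime] [(p.map (Polynomial.C : R →+* R[X])).IsPrime] : (p.map (Polynomial.C : R →+* R[X])).height = p.height := by
  simp [height_eq_height_add_of_liesOver_of_hasGoingDown p]
end

section
open Polynomial

theorem lc_poly_reg {A : Type} [CommRing A] [IsNoetherianRing A] (N : Ideal A) (g : A[X])
    (hg : ∀ q ∈ associatedPrimes A (A ⧸ N), g ∉ q.map (Polynomial.C : A →+* A[X])) (f : A[X])
    (hf : g * f ∈ N.map (Polynomial.C : A →+* A[X])) : f ∈ N.map (Polynomial.C : A →+* A[X]) := by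
  have key : ∀ f : A[X], f ∈ N.map (Polynomial.C : A →+* A[X]) ↔ f.map (Ideal.Quotient.mk N) = 0 := by
    intro f
    rw [Ideal.mem_map_C_iff, Polynomial.ext_iff]
    simp [Ideal.Quotient.eq_zero_iff_mem]
  rw [key, Polynomial.map_mul] at hf
  rw [key]
  have hnz : g.map (Ideal.Quotient.mk N) ∈ nonZeroDivisors (A ⧸ N)[X] := by
    rw [Polynomial.mem_nonZeroDivisors_iff]
    intro a ha
    by_contra ha0
    obtain ⟨q, hq, hqa⟩ := exists_le_isAssociatedPrime_of_isNoetherianRing A a ha0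
    apply hg q hq
    rw [Ideal.mem_map_C_iff]
    intro n
    apply hqa
    rw [Submodule.mem_colon_singleton]
    have := congrArg (fun p => Polynomial.coeff p n) ha
    simp only [Polynomial.coeff_smul, Polynomial.coeff_map, Polynomial.coeff_zero, smul_eq_mul] at this
    rw [Submodule.mem_bot, Algebra.smul_def, mul_comm]
    exact this
  exact (mul_left_mem_nonZeroDivisors_eq_zero_iff hnz).1 hf

open RingTheory.Sequence in
theorem LcCM.polynomial {A : Type} [CommRing A] [IsNoetherianRing A] (hA : LcCM A) :
    LcCM A[X] := by
  intro P hP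
  let q : Ideal A := P.comap Polynomial.C
  have hq : q.IsPrime := Ideal.IsPrime.comap Polynomial.C
  have hlo : P.LiesOver q := ⟨rfl⟩
  have hqX : (q.map (Polynomial.C : A →+* A[X])).IsPrime := Ideal.isPrime_map_C_of_isPrime
  have hqXP : q.map (Polynomial.C : A →+* A[X]) ≤ P := Ideal.map_comap_le
  have hcomap : ∀ q : Ideal A, (q.map (Polynomial.C : A →+* A[X])).comap Polynomial.C = q := by
    intro q
    refine le_antisymm (fun a ha => ?_) Ideal.le_comap_map
    have := Ideal.mem_map_C_iff.1 (Ideal.mem_comap.1 ha) 0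
    simpa using this
  have hlo' : (q.map (Polynomial.C : A →+* A[X])).LiesOver q := ⟨(hcomap q).symm⟩
  obtain ⟨rs, h1, h2, h3⟩ := hA q hq
  have hX := lc_height_map q
  have hreg : IsWeaklyRegular A[X] (rs.map (Polynomial.C : A →+* A[X])) :=
    IsWeaklyRegular.of_flat (S := A[X]) h2
  have hmem : ∀ r ∈ rs.map (Polynomial.C : A →+* A[X]), r ∈ P := by
    intro r hr
    obtain ⟨s, hs, rfl⟩ := List.mem_map.1 hr
    exact h1 s hs
  by_cases hPq : P ≤ q.map Polynomial.C
  · refine ⟨rs.map Polynomial.C, hmem, hreg, ?_⟩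
    rw [← le_antisymm hqXP hPq, hX, ← h3]; simp
  · have hfin := associatedPrimes.finite A (A ⧸ (Ideal.ofList rs • ⊤ : Submodule A A))
    have hav : ¬ ((P : Set A[X]) ⊆ ⋃ q' ∈ (hfin.toFinset : Set (Ideal A)),
        ((Ideal.map Polynomial.C q' : Ideal A[X]) : Set A[X])) := by
      rw [Ideal.subset_union_prime ⊥ ⊥]
      · rintro ⟨q', hq', hle⟩
        rw [Set.Finite.mem_toFinset] at hq'
        have hq'p : q'.IsPrime := hq'.1
        have hh := hA.height_le rs h2 q' hq'
        rw [h3] at hh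
        have hqq : q ≤ q' := by
          rw [← hcomap q']; exact Ideal.comap_mono hle
        have hqf : q.FiniteHeight := ⟨Or.inr (by rw [← h3]; simp)⟩
        have : q = q' := Ideal.eq_of_le_of_height_le q hqq hh
        rw [← this] at hle
        exact hPq hle
      · intro i hi _ _
        rw [Set.Finite.mem_toFinset] at hi
        have : i.IsPrime := hi.1
        exact Ideal.isPrime_map_C_of_isPrime
    rw [Set.not_subset] at hav
    obtain ⟨g, hgP, hg⟩ := hav
    have hg' : ∀ q' ∈ associatedPrimes A (A ⧸ (Ideal.ofList rs • ⊤ : Submodule A A)),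
        g ∉ q'.map (Polynomial.C : A →+* A[X]) := by
      intro q' hq' hgq
      apply hg
      simp only [Set.mem_iUnion]
      exact ⟨q', by simpa using hq', hgq⟩
    refine ⟨rs.map Polynomial.C ++ [g], ?_, ?_, ?_⟩
    · intro r hr
      rcases List.mem_append.1 hr with hr | hr
      · exact hmem r hr
      · rw [List.mem_singleton.1 hr]; exact hgP
    · refine (isWeaklyRegular_append_iff _ _ _).2 ⟨hreg, (isWeaklyRegular_singleton_iff _ _).2 ?_⟩
      rw [isSMulRegular_quotient_iff_mem_of_smul_mem]
      intro f hf
      have e : (Ideal.ofList (rs.map (Polynomial.C : A →+* A[X])) • ⊤ : Submodule A[X] A[X]) =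
          Ideal.map Polynomial.C (Ideal.ofList rs • ⊤ : Ideal A) := by
        rw [← Ideal.map_ofList]; simp
      rw [e] at hf ⊢
      exact lc_poly_reg _ g hg' f hf
    · have hlt : q.map (Polynomial.C : A →+* A[X]) < P := lt_of_le_not_ge hqXP hPq
      have a1 := Ideal.height_add_one_le_of_lt_of_isPrime hlt
      have a2 := lc_height_le q P
      rw [hX] at a1
      rw [← le_antisymm a1 a2, ← h3]; simp

end

open RingTheory.Sequence in
theorem LcCM.of_equiv {A B : Type} [CommRing A] [CommRing B] (e : A ≃+* B) (hA : LcCM A) :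
    LcCM B := by
  intro P hP
  obtain ⟨rs, h1, h2, h3⟩ := hA (P.comap e) (Ideal.IsPrime.comap e)
  refine ⟨rs.map e, ?_, ?_, ?_⟩
  · intro r hr
    obtain ⟨s, hs, rfl⟩ := List.mem_map.1 hr
    exact h1 s hs
  · refine (e.toAddEquiv.isWeaklyRegular_congr ?_).1 h2
    exact List.forall₂_map_right_iff.mpr <| List.forall₂_same.mpr fun r _ x => by simp
  · rw [List.length_map, h3]; exact e.height_comap P

open RingTheory.Sequence in
theorem LcCM.field (k : Type) [Field k] : LcCM k := by
  intro P hP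
  refine ⟨[], by simp, .nil k k, ?_⟩
  have : P = ⊥ := (Ideal.eq_bot_or_top P).resolve_right hP.ne_top
  rw [this, Ideal.height_bot]; simp

theorem LcCM.mvPolynomial (k : Type) [Field k] (n : ℕ) : LcCM (MvPolynomial (Fin n) k) := by
  induction n with
  | zero => exact (LcCM.field k).of_equiv (MvPolynomial.isEmptyAlgEquiv k (Fin 0)).symm.toRingEquiv
  | succ n ih => exact ih.polynomial.of_equiv (MvPolynomial.finSuccEquiv k n).symm.toRingEquiv

theorem lc_colim {R : Type} [CommRing R] [IsNoetherianRing R] {J : Type} [SmallCategory J]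
    [IsFiltered J] (F : J ⥤ ModuleCat.{0} R) (c : Cocone F) (hc : IsColimit c) (m : c.pt) :
    ∃ (j : J) (y : F.obj j), ∀ r : R, r • y = 0 ↔ r • m = 0 := by
  obtain ⟨j₀, y₀, hy₀⟩ := Concrete.isColimit_exists_rep F hc m
  obtain ⟨a, ⟨j, y, hy, rfl⟩, hmax⟩ := set_has_maximal_iff_noetherian.mpr
    (inferInstance : IsNoetherian R R)
    {a : Ideal R | ∃ (j : J) (y : F.obj j), c.ι.app j y = m ∧ a = Ideal.torsionOf R (F.obj j) y}
    ⟨_, j₀, y₀, hy₀, rfl⟩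
  refine ⟨j, y, fun r => ⟨fun h => ?_, fun h => ?_⟩⟩
  · rw [← hy]
    exact ((c.ι.app j).hom.map_smul r y).symm.trans ((congrArg _ h).trans (map_zero (c.ι.app j).hom))
  · have h0 : c.ι.app j (r • y) = c.ι.app j 0 := by
      refine ((c.ι.app j).hom.map_smul r y).trans ?_
      refine (congrArg (r • ·) hy).trans (h.trans (map_zero (c.ι.app j).hom).symm)
    obtain ⟨k, f, g, hfg⟩ := Concrete.isColimit_exists_of_rep_eq F hc (r • y) 0 h0
    have hfg' : r • (F.map f).hom y = 0 :=
      ((F.map f).hom.map_smul r y).symm.trans (hfg.trans (map_zero (F.map g).hom))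
    have hle : Ideal.torsionOf R (F.obj j) y ≤ Ideal.torsionOf R (F.obj k) ((F.map f).hom y) := by
      intro s hs
      rw [Ideal.mem_torsionOf_iff] at hs ⊢
      exact ((F.map f).hom.map_smul s y).symm.trans
        ((congrArg (F.map f).hom hs).trans (map_zero (F.map f).hom))
    have hc' : c.ι.app k ((F.map f).hom y) = m := by
      rw [← hy, ← c.w f]; rfl
    have hnlt := hmax _ ⟨k, (F.map f).hom y, hc', rfl⟩
    have heq := eq_of_le_of_not_lt hle hnlt
    have : r ∈ Ideal.torsionOf R (F.obj j) y := by
      rw [heq, Ideal.mem_torsionOf_iff]; exact hfg'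
    exact this

theorem lc_rep {R : Type} [CommRing R] [IsNoetherianRing R] (I : Ideal R) (h : ℕ)
    (M : ModuleCat.{0} R) (m : (localCohomology I h).obj M) :
    ∃ (t : ℕ) (y : Abelian.Ext (ModuleCat.of R (R ⧸ I ^ t)) M h),
      ∀ r : R, r • y = 0 ↔ r • m = 0 := by
  have := localCohomology.hasColimitDiagram.{0,0} (localCohomology.idealPowersDiagram I) h
  let D := localCohomology.diagram (localCohomology.idealPowersDiagram I) h
  let c := ((evaluation (ModuleCat.{0} R) (ModuleCat.{0} R)).obj M).mapCocone (colimit.cocone D)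
  have hc : IsColimit c := isColimitOfPreserves _ (colimit.isColimit D)
  obtain ⟨j, y, hy⟩ := lc_colim _ c hc m
  obtain ⟨z, hz⟩ := lc_ext_compare (ModuleCat.of R (R ⧸ I ^ j.unop.unop)) M h y
  exact ⟨j.unop.unop, z, fun r => (hz r).symm.trans (hy r)⟩

theorem lc_ext_annihilate {R : Type} [CommRing R] (J : Ideal R) (M : ModuleCat.{0} R) (n : ℕ)
    (y : Abelian.Ext (ModuleCat.of R (R ⧸ J)) M n) (r : R) (hr : r ∈ J) : r • y = 0 := by
  have mem_ann : r ∈ Module.annihilator R (R ⧸ J) := by rwa [Ideal.annihilator_quotient]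
  have h0 : r • 𝟙 (ModuleCat.of R (R ⧸ J)) = 0 := by
    apply ModuleCat.hom_ext
    apply LinearMap.ext
    intro x
    exact Module.mem_annihilator.1 mem_ann x
  have smul_eq : r • y = (Ext.mk₀ (r • 𝟙 (ModuleCat.of R (R ⧸ J)))).comp y (zero_add n) := by
    simp [Ext.mk₀_smul]
  rw [smul_eq, h0]; simp

theorem lc_final {R : Type} [CommRing R] [IsNoetherianRing R] (hR : LcCM R) (I : Ideal R) (h : ℕ)
    (hI : I.height = (h : ℕ∞)) (p : Ideal R)
    (hp : p ∈ associatedPrimes R ((localCohomology I h).obj (ModuleCat.of R R))) :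
    p ∈ I.minimalPrimes := by
  rw [AssociatedPrimes.mem_iff, isAssociatedPrime_iff] at hp
  obtain ⟨hpp, m, hm⟩ := hp
  obtain ⟨t, y, hy⟩ := lc_rep I h (ModuleCat.of R R) m
  have hyp : ∀ r : R, r • y = 0 ↔ r ∈ p := by
    intro r
    rw [hy, hm, Submodule.mem_colon_singleton, Submodule.mem_bot]
  have hJp : I ^ t ≤ p := fun r hr => (hyp r).1 (lc_ext_annihilate _ _ _ y r hr)
  have hIp : I ≤ p := hpp.le_of_pow_le hJp
  obtain ⟨fs, hf1, hf2, hf3⟩ := hR.grade (I ^ t) h (fun q hq hle => by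
    rw [← hI]; exact Ideal.height_mono (hq.le_of_pow_le hle))
  subst hf2
  have hle : p.height ≤ fs.length := by
    by_contra! hlt
    refine lc_main_ext (I ^ t) p hpp.ne_top (ModuleCat.of R R) fs hf1 hf3
      (fun i hi => hR.ext p hpp i (lt_of_le_of_lt (by exact_mod_cast hi) hlt))
      (fun i hi => lc_ext_of_weak (I ^ t) (fun h => ?_) fs hf1 hf3 i hi) y hyp
    rw [h] at hJp
    exact hpp.ne_top (top_le_iff.1 hJp)
  have : p.FiniteHeight := ⟨Or.inr (fun h => by rw [h] at hle; simp at hle)⟩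
  exact Ideal.mem_minimalPrimes_of_height_le hIp (hle.trans hI.ge)

end

/-- Every associated prime of the local cohomology module `H^h_I(R)`, where
`R = k[x₁,…,xₙ]` and `h` is the height of `I`, is a minimal prime of `I`. -/
theorem stmt_0 (n : ℕ) (k : Type) [Field k]
    (I : Ideal (MvPolynomial (Fin n) k)) (h : ℕ) (hh : idealHeight I = (h : ℕ∞)) :
    ∀ p ∈ associatedPrimes (MvPolynomial (Fin n) k)
      ((localCohomology I h).obj (ModuleCat.of (MvPolynomial (Fin n) k) (MvPolynomial (Fin n) k))),
      p ∈ I.minimalPrimes := by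
  intro p hp
  refine lc_final (LcCM.mvPolynomial k n) I h ?_ p hp
  rw [← hh, Ideal.height_eq_inf_minimalPrimes, idealHeight, iInf_subtype]
  exact iInf_congr fun q => iInf_congr fun hq =>
    PrimeSpectrum.height_eq_orderHeight ⟨q, hq.1.1⟩
end

section
/- Let R = k[x_1,...,x_n] and let α ∈ {-1,0}^n with p_α = (x_i : α_i = -1), l = |α|. Every Z^n-graded R-module endomorphism of H^l_{p_α}(R) is multiplication by a scalar in k; more precisely, the restriction map from graded endomorphisms of H^l_{p_α}(R) to k-linear endomorphisms of its degree-α component (a 1-dimensional space) is bijective. -/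
open MvPolynomial

/-- `a ∈ Ω = {-1,0}^n`. -/
def isOm {n : ℕ} (a : Fin n → ℤ) : Prop := ∀ i, a i = 0 ∨ a i = -1

/-- The face prime ideal `p_a = (xᵢ : a i = -1)`. -/
noncomputable def faceIdeal {n : ℕ} (k : Type*) [CommSemiring k] (a : Fin n → ℤ) :
    Ideal (MvPolynomial (Fin n) k) :=
  Ideal.span (MvPolynomial.X '' {i | a i = -1})

/-- `|a|`, the number of `-1` entries of `a ∈ Ω`. -/
def wt {n : ℕ} (a : Fin n → ℤ) : ℕ := (Finset.univ.filter fun i => a i = -1).card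

/-- The local cohomology module `H^r_I(R)` for `R = k[x₁,…,xₙ]`, as a type. -/
abbrev LC {n : ℕ} (k : Type) [Field k] (I : Ideal (MvPolynomial (Fin n) k)) (r : ℕ) : Type :=
  ((localCohomology I r).obj
    (ModuleCat.of (MvPolynomial (Fin n) k) (MvPolynomial (Fin n) k)))

/-- A family of `k`-subspaces indexed by `ℤⁿ` is a compatible `ℤⁿ`-grading of an
`R = k[x₁,…,xₙ]`-module when multiplication by `xᵢ` raises degrees by `eᵢ`. -/
def GradingCompat {n : ℕ} (k : Type) [Field k] (M : Type*) [AddCommGroup M]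
    [Module (MvPolynomial (Fin n) k) M] [Module k M]
    (g : (Fin n → ℤ) → Submodule k M) : Prop :=
  ∀ (i : Fin n) (d : Fin n → ℤ), ∀ m ∈ g d,
    (MvPolynomial.X i : MvPolynomial (Fin n) k) • m ∈ g (d + Pi.single i 1)

section
open CategoryTheory Limits Opposite
namespace LCaux
noncomputable section
variable {R : Type} [CommRing R]

abbrev FF (Y : ModuleCat.{0} R) : ModuleCat.{0} R ⥤ (ModuleCat.{0} R)ᵒᵖ :=
  ((linearYoneda R (ModuleCat.{0} R)).obj Y).rightOp

abbrev FM {Y Z : ModuleCat.{0} R} (f : Y ⟶ Z) : FF Z ⟶ FF Y :=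
  NatTrans.rightOp ((linearYoneda R (ModuleCat.{0} R)).map f)

/-- the short complex of complexes -/
def cxS (S : ShortComplex (ModuleCat.{0} R)) (P : ChainComplex (ModuleCat.{0} R) ℕ) :
    ShortComplex (ChainComplex (ModuleCat.{0} R)ᵒᵖ ℕ) :=
  ShortComplex.mk ((NatTrans.mapHomologicalComplex (FM S.g) _).app P)
    ((NatTrans.mapHomologicalComplex (FM S.f) _).app P) (by
      ext i
      apply Quiver.Hom.unop_inj
      ext (x : _ ⟶ _)
      change (x ≫ S.f) ≫ S.g = 0
      simp)

def cxSmap (S : ShortComplex (ModuleCat.{0} R)) {P Q : ChainComplex (ModuleCat.{0} R) ℕ}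
    (φ : P ⟶ Q) : cxS S P ⟶ cxS S Q where
  τ₁ := ((FF S.X₃).mapHomologicalComplex _).map φ
  τ₂ := ((FF S.X₂).mapHomologicalComplex _).map φ
  τ₃ := ((FF S.X₁).mapHomologicalComplex _).map φ
  comm₁₂ := (NatTrans.mapHomologicalComplex (FM S.g) _).naturality φ
  comm₂₃ := (NatTrans.mapHomologicalComplex (FM S.f) _).naturality φ

lemma cxS_deg (S : ShortComplex (ModuleCat.{0} R)) (hS : S.ShortExact) (X : ModuleCat.{0} R) [Projective X]
    (w) : (ShortComplex.mk ((FM S.g).app X) ((FM S.f).app X) w).ShortExact := by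
  have h : (ShortComplex.mk (((linearYoneda R (ModuleCat.{0} R)).map S.f).app (op X))
    (((linearYoneda R (ModuleCat.{0} R)).map S.g).app (op X)) (by
      ext (x : _ ⟶ _)
      change (x ≫ S.f) ≫ S.g = 0
      simp)).ShortExact := by
    have := hS.mono_f
    have := hS.epi_g
    refine { exact := ?_, mono_f := ?_, epi_g := ?_ }
    · rw [ShortComplex.moduleCat_exact_iff]
      intro (x : X ⟶ S.X₂) (hx : x ≫ S.g = 0)
      exact ⟨hS.exact.lift x hx, hS.exact.lift_f x hx⟩
    · rw [ModuleCat.mono_iff_injective]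
      intro (x : X ⟶ S.X₁) (y : X ⟶ S.X₁) (hxy : x ≫ S.f = y ≫ S.f)
      exact (cancel_mono _).1 hxy
    · rw [ModuleCat.epi_iff_surjective]
      intro (x : X ⟶ S.X₃)
      exact ⟨Projective.factorThru x S.g, Projective.factorThru_comp x S.g⟩
  exact h.op

lemma cxS_shortExact (S : ShortComplex (ModuleCat.{0} R)) (hS : S.ShortExact)
    {X : ModuleCat.{0} R} (P : ProjectiveResolution X) : (cxS S P.complex).ShortExact := by
  apply HomologicalComplex.shortExact_of_degreewise_shortExact
  intro i
  exact cxS_deg S hS (P.complex.X i) _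

lemma homology_zero (N : ModuleCat.{0} R) (y : R) (hy : Function.Bijective (fun m : N => y • m))
    {X : ModuleCat.{0} R} (hX : ∀ x : X, y • x = 0) (P : ProjectiveResolution X) (i : ℕ) :
    IsZero ((((FF N).mapHomologicalComplex _).obj P.complex).homology i) := by
  rw [← HomologicalComplex.exactAt_iff_isZero_homology, HomologicalComplex.exactAt_iff]
  rw [← ShortComplex.exact_unop_iff, ShortComplex.moduleCat_exact_iff]
  intro (φ : P.complex.X i ⟶ N) (hφ : P.complex.d _ i ≫ φ = 0)
  have hXz : y • (𝟙 X) = 0 := by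
    ext x
    exact hX x
  have hz : (y • (𝟙 P.complex)) ≫ P.π = 0 := by
    have : (y • (𝟙 P.complex)) ≫ P.π = P.π ≫ (ChainComplex.single₀ _).map (y • (𝟙 X)) := by
      apply HomologicalComplex.to_single_hom_ext
      rw [HomologicalComplex.comp_f, HomologicalComplex.comp_f, HomologicalComplex.smul_f_apply,
        HomologicalComplex.id_f, ChainComplex.single₀_map_f_zero, Linear.smul_comp,
        Category.id_comp]
      exact ((Linear.comp_smul _ _ _ (P.π.f 0) y (𝟙 X)).trans
        (congrArg (fun t => y • t) (Category.comp_id _))).symm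
    rw [this, hXz]
    simp
  let H := ProjectiveResolution.liftHomotopyZero _ hz
  have hH := H.comm i
  let e : N ≃ₗ[R] N := LinearEquiv.ofBijective (LinearMap.lsmul R N y) hy
  let φ' : P.complex.X i ⟶ N := φ ≫ ModuleCat.ofHom (e.symm : N →ₗ[R] N)
  have h1 : y • φ' = φ := by
    ext x
    exact e.apply_symm_apply (φ x)
  have h2 : P.complex.d ((ComplexShape.down ℕ).prev i) i ≫ φ' = 0 := by
    simp only [φ']
    rw [← Category.assoc]
    erw [hφ]
    simp
  refine ⟨H.hom _ i ≫ φ', ?_⟩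
  change P.complex.d i _ ≫ H.hom _ i ≫ φ' = φ
  rw [← h1]
  have h3 : y • φ' = (y • 𝟙 P.complex : P.complex ⟶ P.complex).f i ≫ φ' := by simp
  rw [h3, hH]
  simp only [dNext, prevD, AddMonoidHom.mk'_apply, HomologicalComplex.zero_f, add_zero,
    Preadditive.add_comp, Category.assoc, h2, comp_zero]

/-- the connecting map at the level of complexes -/
def dl (S : ShortComplex (ModuleCat.{0} R)) (hS : S.ShortExact) (n : ℕ)
    {X : ModuleCat.{0} R} (P : ProjectiveResolution X) :
    (HomologicalComplex.homologyFunctor (ModuleCat.{0} R)ᵒᵖ _ (n+1)).obj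
        (((FF S.X₁).mapHomologicalComplex (ComplexShape.down ℕ)).obj P.complex) ⟶
      (HomologicalComplex.homologyFunctor (ModuleCat.{0} R)ᵒᵖ _ n).obj
        (((FF S.X₃).mapHomologicalComplex (ComplexShape.down ℕ)).obj P.complex) :=
  (cxS_shortExact S hS P).δ (n+1) n (by simp)

lemma dl_nat (S : ShortComplex (ModuleCat.{0} R)) (hS : S.ShortExact) (n : ℕ)
    {X Y : ModuleCat.{0} R} (P : ProjectiveResolution X) (Q : ProjectiveResolution Y)
    (φ : P.complex ⟶ Q.complex) :
    ((FF S.X₁).mapHomologicalComplex _ ⋙ HomologicalComplex.homologyFunctor _ _ (n+1)).map φ ≫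
      dl S hS n Q = dl S hS n P ≫
    ((FF S.X₃).mapHomologicalComplex _ ⋙ HomologicalComplex.homologyFunctor _ _ n).map φ :=
  (HomologicalComplex.HomologySequence.δ_naturality (cxSmap S φ)
      (cxS_shortExact S hS P) (cxS_shortExact S hS Q) (n+1) n (by simp)).symm

/-- connecting -/
def conn (S : ShortComplex (ModuleCat.{0} R)) (hS : S.ShortExact) (n : ℕ) :
    (FF S.X₁).leftDerived (n+1) ⟶ (FF S.X₃).leftDerived n where
  app X := ((projectiveResolution X).isoLeftDerivedObj (FF S.X₁) (n+1)).hom ≫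
    dl S hS n (projectiveResolution X) ≫
    ((projectiveResolution X).isoLeftDerivedObj (FF S.X₃) n).inv
  naturality X Y f := by
    generalize projectiveResolution X = P
    generalize projectiveResolution Y = Q
    let φ : P.complex ⟶ Q.complex := ProjectiveResolution.lift f P Q
    have hφ : φ.f 0 ≫ Q.π.f 0 = P.π.f 0 ≫ f := by
      have : (φ ≫ Q.π).f 0 = (P.π ≫ (ChainComplex.single₀ _).map f).f 0 := by
        rw [ProjectiveResolution.lift_commutes f P Q]
      rw [HomologicalComplex.comp_f, HomologicalComplex.comp_f,
        ChainComplex.single₀_map_f_zero] at this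
      exact this
    have nat := dl_nat S hS n P Q φ
    have a1 := ProjectiveResolution.isoLeftDerivedObj_hom_naturality f P Q φ hφ (FF S.X₁) (n+1)
    have a2 := ProjectiveResolution.isoLeftDerivedObj_inv_naturality f P Q φ hφ (FF S.X₃) n
    rw [← Category.assoc, a1, Category.assoc, Category.assoc, Category.assoc, a2]
    congr 1
    rw [← Category.assoc, nat, Category.assoc]

lemma conn_isIso (S : ShortComplex (ModuleCat.{0} R)) (hS : S.ShortExact) (n : ℕ)
    (y : R) (hy : Function.Bijective (fun m : S.X₂ => y • m))
    (X : ModuleCat.{0} R) (hX : ∀ x : X, y • x = 0) : IsIso ((conn S hS n).app X) := by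
  have : IsIso (dl S hS n (projectiveResolution X)) :=
    ShortComplex.ShortExact.isIso_δ _ _ _ _
      (homology_zero S.X₂ y hy hX (projectiveResolution X) _)
      (homology_zero S.X₂ y hy hX (projectiveResolution X) _)
  dsimp only [conn]
  infer_instance

/-- the diagram at a module -/
def DD (I : Ideal R) (i : ℕ) (Y : ModuleCat.{0} R) : (ℕᵒᵖ)ᵒᵖ ⥤ ModuleCat.{0} R :=
  (localCohomology.ringModIdeals (localCohomology.idealPowersDiagram I)).op ⋙
    ((FF Y).leftDerived i).leftOp

lemma pow_bij {N : Type} [AddCommGroup N] [Module R N] (y : R)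
    (hy : Function.Bijective (fun m : N => y • m)) (t : ℕ) :
    Function.Bijective (fun m : N => y ^ t • m) := by
  induction t with
  | zero => simpa using! Function.bijective_id
  | succ t ih =>
    have : (fun m : N => y ^ (t+1) • m) = (fun m : N => y ^ t • m) ∘ (fun m : N => y • m) := by
      funext m
      simp [pow_succ, mul_smul]
    rw [this]
    exact ih.comp hy

lemma DD_shift (I : Ideal R) (S : ShortComplex (ModuleCat.{0} R)) (hS : S.ShortExact) (n : ℕ)
    (y : R) (hyI : y ∈ I) (hy : Function.Bijective (fun m : S.X₂ => y • m)) :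
    Nonempty (DD I (n+1) S.X₁ ≅ DD I n S.X₃) := by
  let α : DD I n S.X₃ ⟶ DD I (n+1) S.X₁ := Functor.whiskerLeft _ (NatTrans.leftOp (conn S hS n))
  have : ∀ t, IsIso (α.app t) := by
    intro t
    have := conn_isIso S hS n (y ^ (t.unop.unop)) (pow_bij y hy _)
      ((localCohomology.ringModIdeals (localCohomology.idealPowersDiagram I)).obj t.unop) (by
        intro x
        obtain ⟨r, rfl⟩ := Submodule.Quotient.mk_surjective _ x
        refine (Submodule.Quotient.mk_smul _ _ _).symm.trans ?_
        refine (Submodule.Quotient.mk_eq_zero _).2 ?_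
        exact Ideal.mul_mem_right _ _ (Ideal.pow_mem_pow hyI _))
    exact @isIso_unop _ _ _ _ ((conn S hS n).app _) this
  have : IsIso α := NatIso.isIso_of_isIso_app α
  exact ⟨(asIso α).symm⟩

lemma DD_iso (I : Ideal R) (n : ℕ) {M N : ModuleCat.{0} R} (e : M ≅ N) :
    Nonempty (DD I n M ≅ DD I n N) :=
  ⟨(Functor.isoWhiskerLeft (localCohomology.diagram (localCohomology.idealPowersDiagram I) n)
    ((evaluation _ _).mapIso e))⟩

instance (Y : ModuleCat.{0} R) : PreservesFiniteColimits (FF Y) := by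
  have : PreservesLimits ((linearYoneda R (ModuleCat.{0} R)).obj Y) :=
    have : PreservesLimits ((linearYoneda R (ModuleCat.{0} R)).obj Y ⋙ forget _) :=
      (inferInstance : PreservesLimits (yoneda.obj Y))
    preservesLimits_of_reflects_of_preserves _ (forget _)
  exact preservesFiniteColimits_rightOp _

lemma DD_zero (I : Ideal R) (Y : ModuleCat.{0} R) :
    Nonempty (DD I 0 Y ≅ (localCohomology.ringModIdeals (localCohomology.idealPowersDiagram I)).op ⋙
      (linearYoneda R (ModuleCat.{0} R)).obj Y) := by
  let α : (linearYoneda R (ModuleCat.{0} R)).obj Y ⟶ ((FF Y).leftDerived 0).leftOp :=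
    NatTrans.leftOp (FF Y).leftDerivedZeroIsoSelf.hom
  have : ∀ t, IsIso (α.app t) := by
    intro t
    have : IsIso ((FF Y).leftDerivedZeroIsoSelf.hom.app t.unop) := inferInstance
    exact @isIso_unop _ _ _ _ ((FF Y).leftDerivedZeroIsoSelf.hom.app t.unop) this
  have : IsIso α := NatIso.isIso_of_isIso_app α
  exact ⟨Functor.isoWhiskerLeft _ (asIso α).symm⟩

lemma LC_iso (I : Ideal R) (n : ℕ) (Y : ModuleCat.{0} R) :
    Nonempty ((localCohomology I n).obj Y ≅ colimit (DD I n Y)) :=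
  ⟨colimitObjIsoColimitCompEvaluation _ _⟩

/-- the evaluation cocone -/
def evc (I : Ideal R) (Y : ModuleCat.{0} R) :
    Cocone ((localCohomology.ringModIdeals (localCohomology.idealPowersDiagram I)).op ⋙
      (linearYoneda R (ModuleCat.{0} R)).obj Y) where
  pt := Y
  ι :=
    { app := fun t => @ModuleCat.ofHom R _ (ModuleCat.of R (R ⧸ I ^ (t.unop.unop)) ⟶ Y) Y _ _ _ _
        { toFun := fun φ => φ (Submodule.Quotient.mk 1)
          map_add' := fun _ _ => rfl
          map_smul' := fun _ _ => rfl }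
      naturality := by
        intro s t f
        ext (φ : ModuleCat.of R (R ⧸ I ^ (s.unop.unop)) ⟶ Y)
        rfl }

lemma evc_surj (I : Ideal R) (Y : ModuleCat.{0} R) (y : Y) (t : ℕ) (ht : ∀ r ∈ I ^ t, r • y = 0) :
    ∃ φ : ((localCohomology.ringModIdeals (localCohomology.idealPowersDiagram I)).op ⋙
      (linearYoneda R (ModuleCat.{0} R)).obj Y).obj (op (op t)), (evc I Y).ι.app (op (op t)) φ = y := by
  let ψ : (R ⧸ I ^ t) →ₗ[R] Y := Submodule.liftQ _ (LinearMap.toSpanSingleton R Y y) (by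
          intro r hr
          exact ht r hr)
  let φ : ModuleCat.of R (R ⧸ I ^ t) ⟶ Y := ModuleCat.ofHom ψ
  have h : ψ (Submodule.Quotient.mk 1) = y := one_smul R y
  exact ⟨φ, h⟩

lemma colim_zero (I : Ideal R) (Y : ModuleCat.{0} R)
    (hY : ∀ y : Y, ∃ t : ℕ, ∀ r ∈ I ^ t, r • y = 0) :
    Nonempty (colimit (DD I 0 Y) ≅ Y) := by
  obtain ⟨e⟩ := DD_zero I Y
  let G := (localCohomology.ringModIdeals (localCohomology.idealPowersDiagram I)).op ⋙
      (linearYoneda R (ModuleCat.{0} R)).obj Y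
  let h : colimit G ⟶ Y := colimit.desc G (evc I Y)
  have hι : ∀ (t) (φ : G.obj t), h (colimit.ι G t φ) = (evc I Y).ι.app t φ := by
    intro t φ
    exact ConcreteCategory.congr_hom (colimit.ι_desc (evc I Y) t) φ
  have hbij : Function.Bijective h := by
    constructor
    · rw [injective_iff_map_eq_zero]
      intro x hx
      obtain ⟨t, φ, rfl⟩ := Concrete.colimit_exists_rep G x
      rw [hι] at hx
      have : φ = 0 := by
        have hx' : (show ModuleCat.of R (R ⧸ I ^ (t.unop.unop)) ⟶ Y from φ)
          (Submodule.Quotient.mk 1) = 0 := hx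
        change (show ModuleCat.of R (R ⧸ I ^ (t.unop.unop)) ⟶ Y from φ) = 0
        generalize (show ModuleCat.of R (R ⧸ I ^ (t.unop.unop)) ⟶ Y from φ) = ψ at hx'
        refine ModuleCat.hom_ext (LinearMap.ext fun z => ?_)
        obtain ⟨r, rfl⟩ := Submodule.Quotient.mk_surjective _ z
        have h2 : (Submodule.Quotient.mk r : R ⧸ I ^ (t.unop.unop)) =
          r • Submodule.Quotient.mk 1 := by
            rw [← Submodule.Quotient.mk_smul]; simp
        rw [h2]
        have := ψ.hom.map_smul r (Submodule.Quotient.mk 1)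
        refine this.trans ?_
        erw [hx']
        simp
      rw [this, map_zero]
    · intro y
      obtain ⟨t, ht⟩ := hY y
      obtain ⟨φ, hφ⟩ := evc_surj I Y y t ht
      exact ⟨colimit.ι G (op (op t)) φ, (hι _ φ).trans hφ⟩
  have : IsIso h := (ConcreteCategory.isIso_iff_bijective h).2 hbij
  exact ⟨HasColimit.isoOfNatIso e ≪≫ asIso h⟩

end
end LCaux

namespace LCaux
noncomputable section
open scoped Classical in
/-- truncated translation -/
def tr (k : Type) [Field k] {n : ℕ} (D E : Set (Fin n → ℤ)) (m : Fin n → ℤ) :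
    (D →₀ k) →ₗ[k] (E →₀ k) :=
  Finsupp.linearCombination k
    (fun d : D => if h : d.1 + m ∈ E then Finsupp.single (⟨d.1 + m, h⟩ : E) (1 : k) else 0)

variable {k : Type} [Field k] {n : ℕ} {D E F : Set (Fin n → ℤ)}

lemma tr_pos (m : Fin n → ℤ) (d : D) (c : k) (h : d.1 + m ∈ E) :
    tr k D E m (Finsupp.single d c) = Finsupp.single ⟨d.1 + m, h⟩ c := by
  simp [tr, Finsupp.linearCombination_single, h]

lemma tr_neg (m : Fin n → ℤ) (d : D) (c : k) (h : d.1 + m ∉ E) :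
    tr k D E m (Finsupp.single d c) = 0 := by
  simp [tr, Finsupp.linearCombination_single, h]

lemma tr_tr (m m' m'' : Fin n → ℤ) (hm : m + m' = m'')
    (h : ∀ d ∈ D, d + m'' ∈ F → d + m ∈ E) :
    tr k E F m' ∘ₗ tr k D E m = tr k D F m'' := by
  subst hm
  ext1 d
  ext1
  simp only [LinearMap.comp_apply, Finsupp.lsingle_apply]
  by_cases h1 : d.1 + (m + m') ∈ F
  · have h2 := h d.1 d.2 h1
    have h3 : (⟨d.1 + m, h2⟩ : E).1 + m' ∈ F := by simpa [add_assoc] using h1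
    rw [tr_pos _ _ _ h2, tr_pos _ _ _ h3, tr_pos _ _ _ h1]
    simp only [add_assoc]
  · rw [tr_neg _ _ _ h1]
    by_cases h2 : d.1 + m ∈ E
    · have h3 : (⟨d.1 + m, h2⟩ : E).1 + m' ∉ F := by simpa [add_assoc] using h1
      rw [tr_pos _ _ _ h2, tr_neg _ _ _ h3]
    · rw [tr_neg _ _ _ h2, map_zero]

lemma tr_zero : tr k D D 0 = LinearMap.id := by
  ext1 d
  ext1
  have h : d.1 + 0 ∈ D := by simp
  simp only [LinearMap.comp_apply, Finsupp.lsingle_apply]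
  rw [tr_pos _ _ _ h]
  simp

/-- exponent vectors as integer vectors -/
def ex (m : Fin n →₀ ℕ) : Fin n → ℤ := fun i => (m i : ℤ)

lemma ex_add (m m' : Fin n →₀ ℕ) : ex (m + m') = ex m + ex m' := by
  funext i; simp [ex]

lemma ex_zero : ex (0 : Fin n →₀ ℕ) = 0 := by
  funext i; simp [ex]

/-- convexity of the support -/
class Cvx (D : Set (Fin n → ℤ)) : Prop where
  cvx : ∀ d ∈ D, ∀ m m' : Fin n →₀ ℕ, d + ex (m + m') ∈ D → d + ex m ∈ D

/-- The module with monomial basis `D`. -/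
abbrev Mon (k : Type) [Field k] {n : ℕ} (D : Set (Fin n → ℤ)) : Type := D →₀ k


/-- the action -/
def act (k : Type) [Field k] {n : ℕ} (D : Set (Fin n → ℤ)) [Cvx D] :
    MvPolynomial (Fin n) k →ₐ[k] Module.End k (Mon k D) :=
  AddMonoidAlgebra.lift k (Module.End k (Mon k D)) (Fin n →₀ ℕ)
    { toFun := fun m => tr k D D (ex m.toAdd)
      map_one' := by
        simpa [ex_zero] using! tr_zero
      map_mul' := fun m m' => by
        refine (tr_tr (ex m'.toAdd) (ex m.toAdd) _ ?_ ?_).symm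
        · rw [toAdd_mul, ex_add, add_comm]
        · intro d hd h
          rw [toAdd_mul, add_comm m.toAdd] at h
          exact Cvx.cvx d hd _ _ h }

lemma act_monomial [Cvx D] (m : Fin n →₀ ℕ) (c : k) :
    act k D (monomial m c) = c • tr k D D (ex m) := by
  exact AddMonoidAlgebra.lift_single _ _ _

instance [Cvx D] : Module (MvPolynomial (Fin n) k) (Mon k D) :=
  Module.compHom _ (act k D).toRingHom

lemma smul_def' [Cvx D] (p : MvPolynomial (Fin n) k) (f : Mon k D) : p • f = act k D p f := rfl

lemma monomial_smul [Cvx D] (m : Fin n →₀ ℕ) (c : k) (f : Mon k D) :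
    (monomial m c : MvPolynomial (Fin n) k) • f = c • tr k D D (ex m) f := by
  rw [smul_def', act_monomial]; rfl

instance [Cvx D] : IsScalarTower k (MvPolynomial (Fin n) k) (Mon k D) := by
  refine ⟨fun c p f => ?_⟩
  rw [smul_def', smul_def', map_smul]
  rfl

lemma X_smul [Cvx D] (i : Fin n) (f : Mon k D) :
    (X i : MvPolynomial (Fin n) k) • f = tr k D D (Pi.single i 1) f := by
  have : ex (Finsupp.single i 1) = Pi.single i 1 := by
    funext j
    simp only [ex, Finsupp.single_apply, Pi.single_apply, eq_comm]
    split_ifs <;> simp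
  rw [← this]
  refine (monomial_smul _ 1 f).trans ?_
  rw [one_smul]

/-- truncation maps which are linear over the polynomial ring -/
def trR (k : Type) [Field k] {n : ℕ} (D E : Set (Fin n → ℤ)) [Cvx D] [Cvx E]
    (h : ∀ d ∈ D, ∀ m : Fin n →₀ ℕ, d + ex m ∈ E → (d + ex m ∈ D ∧ d ∈ E)) :
    Mon k D →ₗ[MvPolynomial (Fin n) k] Mon k E where
  toFun := tr k D E 0
  map_add' := map_add (tr k D E 0)
  map_smul' p f := by
    induction p using MvPolynomial.induction_on' with
    | monomial m c =>
      simp only [RingHom.id_apply]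
      rw [monomial_smul, monomial_smul, map_smul]
      congr 1
      rw [← LinearMap.comp_apply, ← LinearMap.comp_apply]
      rw [tr_tr _ _ (ex m) (by simp), tr_tr _ _ (ex m) (by simp)]
      · intro d hd h1
        simpa using (h d hd m h1).2
      · intro d hd h1
        exact (h d hd m h1).1
    | add p q hp hq =>
      simp only [RingHom.id_apply] at *
      rw [add_smul, add_smul, ← hp, ← hq, map_add]

lemma trR_apply (D E : Set (Fin n → ℤ)) [Cvx D] [Cvx E] (h) (f : Mon k D) :
    trR k D E h f = tr k D E 0 f := rfl

/-- the degrees of `H^{|T|}_{p_T}(R)` -/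
def dom (T : Finset (Fin n)) : Set (Fin n → ℤ) :=
  {d | ∀ i, (i ∈ T → d i < 0) ∧ (i ∉ T → 0 ≤ d i)}

/-- degrees with the `j` coordinate free -/
def domN (T : Finset (Fin n)) (j : Fin n) : Set (Fin n → ℤ) :=
  {d | ∀ i, i ≠ j → (i ∈ T → d i < 0) ∧ (i ∉ T → 0 ≤ d i)}

instance (T : Finset (Fin n)) : Cvx (dom T) := by
  refine ⟨fun d hd m m' h i => ?_⟩
  have h1 := hd i
  have h2 := h i
  simp only [ex, Pi.add_apply, Finsupp.add_apply] at h2 ⊢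
  exact ⟨fun hi => by have := h2.1 hi; push_cast at this; lia,
    fun hi => by have := h1.2 hi; lia⟩

instance (T : Finset (Fin n)) (j : Fin n) : Cvx (domN T j) := by
  refine ⟨fun d hd m m' h i hij => ?_⟩
  have h1 := hd i hij
  have h2 := h i hij
  simp only [ex, Pi.add_apply, Finsupp.add_apply] at h2 ⊢
  exact ⟨fun hi => by have := h2.1 hi; push_cast at this; lia,
    fun hi => by have := h1.2 hi; lia⟩

lemma dom_sub (T : Finset (Fin n)) (j : Fin n) : dom T ⊆ domN T j := fun _ hd i _ => hd i

lemma dom_sub' (T : Finset (Fin n)) (j : Fin n) : dom (insert j T) ⊆ domN T j := by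
  intro d hd i hij
  simpa [hij] using hd i

lemma mem_dom_iff {T : Finset (Fin n)} {j : Fin n} (hj : j ∉ T) (d : Fin n → ℤ) :
    d ∈ dom T ↔ d ∈ domN T j ∧ 0 ≤ d j := by
  constructor
  · exact fun h => ⟨dom_sub _ _ h, (h j).2 hj⟩
  · rintro ⟨h1, h2⟩ i
    by_cases hij : i = j
    · subst hij; exact ⟨fun h => absurd h hj, fun _ => h2⟩
    · exact h1 i hij

lemma mem_dom_iff' {T : Finset (Fin n)} {j : Fin n} (d : Fin n → ℤ) :
    d ∈ dom (insert j T) ↔ d ∈ domN T j ∧ d j < 0 := by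
  constructor
  · exact fun h => ⟨dom_sub' _ _ h, (h j).1 (by simp)⟩
  · rintro ⟨h1, h2⟩ i
    by_cases hij : i = j
    · subst hij; simpa using h2
    · simpa [hij] using h1 i hij

lemma domN_shift (T : Finset (Fin n)) (j : Fin n) (d) (hd : d ∈ domN T j) (c : ℤ) :
    d + Pi.single j c ∈ domN T j := by
  intro i hij
  simpa [hij] using hd i hij

lemma X_bij (T : Finset (Fin n)) (j : Fin n) :
    Function.Bijective (fun m : Mon k (domN T j) => (X j : MvPolynomial (Fin n) k) • m) := by
  rw [Function.bijective_iff_has_inverse]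
  refine ⟨tr k _ _ (Pi.single j (-1)), fun f => ?_, fun f => ?_⟩
  · simp only [X_smul]
    rw [← LinearMap.comp_apply, tr_tr _ _ 0 (by rw [← Pi.single_add]; simp), tr_zero]
    · rfl
    · intro d hd _
      exact domN_shift _ _ _ hd _
  · simp only [X_smul]
    rw [← LinearMap.comp_apply, tr_tr _ _ 0 (by rw [← Pi.single_add]; simp), tr_zero]
    · rfl
    · intro d hd _
      exact domN_shift _ _ _ hd _

/-- the inclusion -/
def incl (k : Type) [Field k] {n : ℕ} {T : Finset (Fin n)} {j : Fin n} (hj : j ∉ T) :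
    Mon k (dom T) →ₗ[MvPolynomial (Fin n) k] Mon k (domN T j) :=
  trR k _ _ (by
    intro d hd m h
    rw [mem_dom_iff hj] at hd ⊢
    refine ⟨⟨h, ?_⟩, hd.1⟩
    have := hd.2
    simp only [ex, Pi.add_apply]
    lia)

/-- the projection -/
def proj (k : Type) [Field k] {n : ℕ} (T : Finset (Fin n)) (j : Fin n) :
    Mon k (domN T j) →ₗ[MvPolynomial (Fin n) k] Mon k (dom (insert j T)) :=
  trR k _ _ (by
    intro d hd m h
    rw [mem_dom_iff'] at h ⊢
    refine ⟨h.1, hd, ?_⟩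
    have := h.2
    simp only [ex, Pi.add_apply] at this
    lia)

lemma incl_inj {T : Finset (Fin n)} {j : Fin n} (hj : j ∉ T) :
    Function.Injective (incl k hj) := by
  refine Function.LeftInverse.injective (g := tr k _ _ 0) fun f => ?_
  rw [incl, trR_apply, ← LinearMap.comp_apply, tr_tr _ _ 0 (by simp), tr_zero]
  · rfl
  · intro d hd _
    simpa using dom_sub _ _ hd

lemma proj_surj (T : Finset (Fin n)) (j : Fin n) : Function.Surjective (proj k T j) := by
  refine Function.RightInverse.surjective (g := tr k _ _ 0) fun f => ?_
  rw [proj, trR_apply, ← LinearMap.comp_apply, tr_tr _ _ 0 (by simp), tr_zero]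
  · rfl
  · intro d hd _
    simpa using dom_sub' _ _ hd

lemma proj_incl {T : Finset (Fin n)} {j : Fin n} (hj : j ∉ T) (f : Mon k (dom T)) :
    proj k T j (incl k hj f) = 0 := by
  rw [incl, proj, trR_apply, trR_apply]
  induction f using Finsupp.induction_linear with
  | zero => simp
  | add f g hf hg => rw [map_add, map_add, hf, hg, add_zero]
  | single d c =>
    have h1 := (mem_dom_iff hj _).1 d.2
    rw [tr_pos _ _ _ (by simpa using h1.1), tr_neg]
    simp only [add_zero, mem_dom_iff']
    exact fun h => absurd h1.2 (not_le.2 h.2)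

lemma decomp {T : Finset (Fin n)} {j : Fin n} (hj : j ∉ T) (f : Mon k (domN T j)) :
    f = tr k (dom T) (domN T j) 0 (tr k _ _ 0 f) +
      tr k (dom (insert j T)) (domN T j) 0 (tr k _ _ 0 f) := by
  induction f using Finsupp.induction_linear with
  | zero => simp
  | add f g hf hg =>
    simp only [map_add]
    nth_rewrite 1 [hf, hg]
    abel
  | single d c =>
    by_cases h : 0 ≤ d.1 j
    · have h1 : d.1 + 0 ∈ dom T := by
        rw [add_zero]; exact (mem_dom_iff hj _).2 ⟨d.2, h⟩
      have h2 : d.1 + 0 ∉ dom (insert j T) := by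
        rw [add_zero, mem_dom_iff']; exact fun h' => absurd h (not_le.2 h'.2)
      rw [tr_neg (E := dom (insert j T)) _ _ _ h2, tr_pos _ _ _ h1, tr_pos _ _ _ (by simp)]
      simp
    · have h1 : d.1 + 0 ∈ dom (insert j T) := by
        rw [add_zero]; exact mem_dom_iff' _ |>.2 ⟨d.2, not_le.1 h⟩
      have h2 : d.1 + 0 ∉ dom T := by
        rw [add_zero, mem_dom_iff hj]; exact fun h' => absurd h'.2 h
      rw [tr_neg (E := dom T) _ _ _ h2, tr_pos _ _ _ h1, tr_pos _ _ _ (by simp)]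
      simp

lemma exact_mid {T : Finset (Fin n)} {j : Fin n} (hj : j ∉ T) (f : Mon k (domN T j))
    (hf : proj k T j f = 0) : ∃ g, incl k hj g = f := by
  refine ⟨tr k _ _ 0 f, ?_⟩
  rw [proj, trR_apply] at hf
  conv_rhs => rw [decomp hj f, hf, map_zero, add_zero]
  rfl

lemma tors (T : Finset (Fin n)) (f : Mon k (dom T)) (i : Fin n) (hi : i ∈ T) :
    ∃ N : ℕ, (X i : MvPolynomial (Fin n) k) ^ N • f = 0 := by
  induction f using Finsupp.induction_linear with
  | zero => exact ⟨0, by simp⟩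
  | add f g hf hg =>
    obtain ⟨a, ha⟩ := hf
    obtain ⟨b, hb⟩ := hg
    refine ⟨a + b, ?_⟩
    rw [smul_add, pow_add, mul_smul, mul_smul, hb, smul_zero, smul_comm, ha, smul_zero, add_zero]
  | single d c =>
    refine ⟨(- d.1 i).toNat, ?_⟩
    rw [X_pow_eq_monomial, monomial_smul, tr_neg, smul_zero]
    intro h
    have := (h i).1 hi
    simp only [ex, Pi.add_apply, Finsupp.single_eq_same] at this
    lia

/-- the ideal generated by the variables in `T` -/
def idl (k : Type) [Field k] {n : ℕ} (T : Finset (Fin n)) : Ideal (MvPolynomial (Fin n) k) :=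
  Ideal.span (MvPolynomial.X '' {i | i ∈ T})

lemma tors' (T : Finset (Fin n)) (f : Mon k (dom T)) :
    ∃ t : ℕ, ∀ r ∈ (idl k T) ^ t, r • f = 0 := by
  let J : Ideal (MvPolynomial (Fin n) k) := LinearMap.ker (LinearMap.toSpanSingleton _ _ f)
  have h : idl k T ≤ J.radical := by
    rw [idl, Ideal.span_le]
    rintro _ ⟨i, hi, rfl⟩
    obtain ⟨N, hN⟩ := tors T f i hi
    exact ⟨N, by simpa [J] using hN⟩
  obtain ⟨t, ht⟩ := Ideal.exists_pow_le_of_le_radical_of_fg h (IsNoetherian.noetherian _)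
  exact ⟨t, fun r hr => by simpa [J] using ht hr⟩

lemma dom_empty_lift (d : Fin n → ℤ) (hd : d ∈ dom (∅ : Finset (Fin n))) :
    ex (Finsupp.equivFunOnFinite.symm (fun i => (d i).toNat)) = d := by
  funext i
  have := (hd i).2 (by simp)
  simp [ex, this]

lemma zero_mem_dom : (0 : Fin n → ℤ) ∈ dom (∅ : Finset (Fin n)) := by
  intro i; simp

lemma ex_mem_dom (m : Fin n →₀ ℕ) : ex m ∈ dom (∅ : Finset (Fin n)) := by
  intro i; simp [ex]

lemma ring_equiv (k : Type) [Field k] (n : ℕ) :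
    Nonempty (MvPolynomial (Fin n) k ≃ₗ[MvPolynomial (Fin n) k] Mon k (dom (∅ : Finset (Fin n)))) := by
  let e : Mon k (dom (∅ : Finset (Fin n))) := Finsupp.single ⟨0, zero_mem_dom⟩ 1
  let φ := LinearMap.toSpanSingleton (MvPolynomial (Fin n) k) _ e
  have hφ : ∀ m c, φ (monomial m c) = Finsupp.single ⟨ex m, ex_mem_dom m⟩ c := by
    intro m c
    simp only [φ, LinearMap.toSpanSingleton_apply, e]
    rw [monomial_smul, tr_pos _ _ _ (by simpa using ex_mem_dom m)]
    simp
  let ψ : Mon k (dom (∅ : Finset (Fin n))) →ₗ[k] MvPolynomial (Fin n) k :=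
    Finsupp.linearCombination k (fun d => monomial
      (Finsupp.equivFunOnFinite.symm (fun i => (d.1 i).toNat)) 1)
  refine ⟨LinearEquiv.ofBijective φ (Function.bijective_iff_has_inverse.2 ⟨ψ, ?_, ?_⟩)⟩
  · intro p
    induction p using MvPolynomial.induction_on' with
    | monomial m c =>
      rw [hφ]
      simp only [ψ, Finsupp.linearCombination_single, smul_monomial, smul_eq_mul, mul_one]
      congr 1
      ext i
      simp [ex]
    | add p q hp hq => rw [map_add, map_add, hp, hq]
  · intro f
    induction f using Finsupp.induction_linear with
    | zero => simp
    | add p q hp hq => rw [map_add, map_add, hp, hq]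
    | single d c =>
      simp only [ψ, Finsupp.linearCombination_single, smul_monomial, smul_eq_mul, mul_one]
      rw [hφ]
      congr 1
      exact Subtype.ext (dom_empty_lift _ d.2)

end
end LCaux

end

namespace LCaux
open CategoryTheory Limits Opposite
noncomputable section
variable {k : Type} [Field k] {n : ℕ}

/-- the short exact sequence -/
def ses (k : Type) [Field k] {n : ℕ} {T : Finset (Fin n)} {j : Fin n} (hj : j ∉ T) :
    ShortComplex (ModuleCat.{0} (MvPolynomial (Fin n) k)) :=
  ShortComplex.mk (ModuleCat.ofHom (incl k hj)) (ModuleCat.ofHom (proj k T j)) (by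
    exact ModuleCat.hom_ext (LinearMap.ext fun f => proj_incl hj f))

lemma ses_exact {T : Finset (Fin n)} {j : Fin n} (hj : j ∉ T) : (ses k hj).ShortExact where
  exact := by
    rw [ShortComplex.moduleCat_exact_iff]
    intro f hf
    exact exact_mid hj f hf
  mono_f := (ModuleCat.mono_iff_injective _).2 (incl_inj hj)
  epi_g := (ModuleCat.epi_iff_surjective _).2 (proj_surj T j)

lemma chain (I : Ideal (MvPolynomial (Fin n) k)) (T : Finset (Fin n))
    (hT : ∀ i ∈ T, (X i : MvPolynomial (Fin n) k) ∈ I) (r : ℕ) :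
    Nonempty (DD I (T.card + r) (ModuleCat.of _ (MvPolynomial (Fin n) k)) ≅
      DD I r (ModuleCat.of _ (Mon k (dom T)))) := by
  induction T using Finset.induction_on generalizing r with
  | empty =>
    obtain ⟨e⟩ := ring_equiv k n
    rw [Finset.card_empty, zero_add]
    exact DD_iso I r e.toModuleIso
  | insert j T hj ih =>
    obtain ⟨e1⟩ := ih (fun i hi => hT i (by simp [hi])) (r + 1)
    obtain ⟨e2⟩ := DD_shift I (ses k hj) (ses_exact hj) r (X j) (hT j (by simp)) (X_bij T j)
    rw [Finset.card_insert_of_notMem hj, add_assoc, add_comm 1 r]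
    exact ⟨e1 ≪≫ e2⟩

lemma LC_equiv (T : Finset (Fin n)) :
    Nonempty (LC k (idl k T) T.card ≃ₗ[MvPolynomial (Fin n) k] Mon k (dom T)) := by
  obtain ⟨e1⟩ := LC_iso (idl k T) T.card (ModuleCat.of _ (MvPolynomial (Fin n) k))
  obtain ⟨e2⟩ := chain (idl k T) T (fun i hi => Ideal.subset_span ⟨i, hi, rfl⟩) 0
  obtain ⟨e3⟩ := colim_zero (idl k T) (ModuleCat.of _ (Mon k (dom T))) (tors' T)
  exact ⟨(e1 ≪≫ HasColimit.isoOfNatIso e2 ≪≫ e3).toLinearEquiv⟩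

/-- the graded pieces attached to a basis -/
def gr {D : Set (Fin n → ℤ)} {M : Type} [AddCommGroup M] [Module k M] (b : D → M)
    (d : Fin n → ℤ) : Submodule k M := Submodule.span k (b '' {x | x.1 = d})

section
variable {D : Set (Fin n → ℤ)} {M : Type} [AddCommGroup M] [Module k M]

lemma gr_pos (b : D → M) (d : D) : gr (k := k) b d.1 = Submodule.span k {b d} := by
  rw [gr]
  congr 1
  have : {x : D | x.1 = d.1} = {d} := by
    ext x; simp [Subtype.ext_iff]
  rw [this, Set.image_singleton]

lemma gr_neg (b : D → M) (d : Fin n → ℤ) (hd : d ∉ D) : gr (k := k) b d = ⊥ := by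
  rw [gr]
  have : {x : D | x.1 = d} = ∅ := by
    ext x
    simp only [Set.mem_ofPred_eq, Set.mem_empty_iff_false, iff_false]
    rintro rfl
    exact hd x.2
  rw [this, Set.image_empty, Submodule.span_empty]

lemma gr_mem (b : D → M) (d : D) (m : M) : m ∈ gr (k := k) b d.1 ↔ ∃ c : k, c • b d = m := by
  rw [gr_pos, Submodule.mem_span_singleton]

lemma gr_internal (b : Module.Basis D k M) : DirectSum.IsInternal (gr (k := k) b) := by
  rw [DirectSum.isInternal_submodule_iff_iSupIndep_and_iSup_eq_top]
  constructor
  · intro d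
    have hle : (⨆ e, ⨆ (_ : e ≠ d), gr (k := k) b e) ≤
        Submodule.span k (b '' {x | x.1 ≠ d}) := by
      refine iSup₂_le fun e he => Submodule.span_mono (Set.image_mono ?_)
      rintro x rfl
      exact he
    refine Disjoint.mono_right hle (b.linearIndependent.disjoint_span_image ?_)
    rw [Set.disjoint_left]
    exact fun x hx hx' => hx' hx
  · rw [eq_top_iff, ← b.span_eq, Submodule.span_le]
    rintro _ ⟨d, rfl⟩
    exact (le_iSup (gr (k := k) b) d.1) ((gr_mem b d _).2 ⟨1, one_smul _ _⟩)

end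

lemma a_mem {a : Fin n → ℤ} {T : Finset (Fin n)} (haT : ∀ i, (i ∈ T → a i = -1) ∧ (i ∉ T → a i = 0)) :
    a ∈ dom T := by
  intro i
  exact ⟨fun h => by rw [(haT i).1 h]; lia, fun h => by rw [(haT i).2 h]⟩

lemma ex_toNat (v : Fin n → ℤ) (hv : ∀ i, 0 ≤ v i) :
    ex (Finsupp.equivFunOnFinite.symm (fun i => (v i).toNat)) = v := by
  funext i
  simp [ex, hv i]

theorem final {T : Finset (Fin n)} {a : Fin n → ℤ}
    (haT : ∀ i, (i ∈ T → a i = -1) ∧ (i ∉ T → a i = 0))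
    {M : Type} [AddCommGroup M] [Module (MvPolynomial (Fin n) k) M] [Module k M]
    [IsScalarTower k (MvPolynomial (Fin n) k) M]
    (e : M ≃ₗ[MvPolynomial (Fin n) k] Mon k (dom T)) :
    ∃ g : (Fin n → ℤ) → Submodule k M,
      DirectSum.IsInternal g ∧ GradingCompat k _ g ∧
      (∀ d : Fin n → ℤ, (d ∈ dom T → Module.finrank k (g d) = 1) ∧
        (d ∉ dom T → Module.finrank k (g d) = 0)) ∧
      (∀ f : M →ₗ[MvPolynomial (Fin n) k] M,
        (∀ d : Fin n → ℤ, ∀ m ∈ g d, f m ∈ g d) → ∃ c : k, ∀ m, f m = c • m) ∧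
      (∀ f₁ f₂ : M →ₗ[MvPolynomial (Fin n) k] M,
        (∀ d : Fin n → ℤ, ∀ m ∈ g d, f₁ m ∈ g d) →
        (∀ d : Fin n → ℤ, ∀ m ∈ g d, f₂ m ∈ g d) →
        (∀ m ∈ g a, f₁ m = f₂ m) → f₁ = f₂) ∧
      (∀ φ : ↥(g a) →ₗ[k] ↥(g a),
        ∃ f : M →ₗ[MvPolynomial (Fin n) k] M,
          (∀ d : Fin n → ℤ, ∀ m ∈ g d, f m ∈ g d) ∧
          ∀ m (hm : m ∈ g a), f m = (φ ⟨m, hm⟩ : M)) := by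
  let e' : M ≃ₗ[k] (dom T →₀ k) := e.restrictScalars k
  let b : Module.Basis (dom T) k M := Module.Basis.ofRepr e'
  have hb : ∀ d, e (b d) = Finsupp.single d 1 := fun d => b.repr_self d
  have hmul : ∀ (d : dom T) (m : Fin n →₀ ℕ) (h : d.1 + ex m ∈ dom T),
      (monomial m 1 : MvPolynomial (Fin n) k) • b d = b ⟨d.1 + ex m, h⟩ := by
    intro d m h
    apply e.injective
    rw [map_smul, hb, hb, monomial_smul, one_smul, tr_pos _ _ _ h]
  have hX : ∀ (d : dom T) (i : Fin n),
      (X i : MvPolynomial (Fin n) k) • b d ∈ gr (k := k) b (d.1 + Pi.single i 1) := by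
    intro d i
    by_cases h : d.1 + Pi.single i 1 ∈ dom T
    · have : (X i : MvPolynomial (Fin n) k) • b d = b ⟨_, h⟩ := by
        apply e.injective
        rw [map_smul, hb, hb, X_smul, tr_pos _ _ _ h]
      rw [this]
      exact (gr_mem b ⟨_, h⟩ _).2 ⟨1, one_smul _ _⟩
    · have : (X i : MvPolynomial (Fin n) k) • b d = 0 := by
        apply e.injective
        rw [map_smul, hb, X_smul, tr_neg _ _ _ h, map_zero]
      rw [this]
      exact zero_mem _
  have haD : a ∈ dom T := a_mem haT
  let A : dom T := ⟨a, haD⟩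
  have hscal : ∀ f : M →ₗ[MvPolynomial (Fin n) k] M,
        (∀ d : Fin n → ℤ, ∀ m ∈ gr (k := k) b d, f m ∈ gr (k := k) b d) →
          ∀ c : k, f (b A) = c • b A → ∀ m, f m = c • m := by
    intro f hf c hc
    have key : ∀ d : dom T, ∃ c : k, f (b d) = c • b d := by
      intro d
      obtain ⟨c, hc⟩ := (gr_mem b d _).1 (hf d.1 (b d) ((gr_mem b d _).2 ⟨1, one_smul _ _⟩))
      exact ⟨c, hc.symm⟩
    have hsc : ∀ (c : k) (p : MvPolynomial (Fin n) k) (m : M), p • c • m = c • p • m := by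
      intro c p m
      rw [← algebraMap_smul (MvPolynomial (Fin n) k) c m,
        ← algebraMap_smul (MvPolynomial (Fin n) k) c (p • m), smul_comm]
    have step : ∀ (d d' : dom T), (∀ i, d.1 i ≤ d'.1 i) → ∀ c : k, f (b d) = c • b d →
        f (b d') = c • b d' := by
      intro d d' hdd c hc
      have h1 := ex_toNat (d'.1 - d.1) (fun i => by simpa using hdd i)
      have h2 : d.1 + ex (Finsupp.equivFunOnFinite.symm (fun i => ((d'.1 - d.1) i).toNat)) ∈ dom T := by
        rw [h1]; simp
      have h3 := hmul d _ h2
      have h4 : (⟨_, h2⟩ : dom T) = d' := by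
        apply Subtype.ext; simp only [h1]; simp
      rw [h4] at h3
      rw [← h3, map_smul, hc, hsc]
    have hall : ∀ d : dom T, f (b d) = c • b d := by
      intro d
      have hE : (fun i => min (d.1 i) (a i)) ∈ dom T := by
        intro i
        have h1 := d.2 i
        have h2 := haD i
        exact ⟨fun h => by have := h1.1 h; exact lt_of_le_of_lt (min_le_left _ _) this,
          fun h => le_min (h1.2 h) (h2.2 h)⟩
      obtain ⟨c', hc'⟩ := key ⟨_, hE⟩
      have hA := step ⟨_, hE⟩ A (fun i => min_le_right _ _) c' hc'
      have hd := step ⟨_, hE⟩ d (fun i => min_le_left _ _) c' hc'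
      have : c = c' := by
        have h := hc.symm.trans hA
        have h0 : (c - c') • b A = 0 := by rw [sub_smul, h, sub_self]
        rcases smul_eq_zero.1 h0 with h0 | h0
        · exact sub_eq_zero.1 h0
        · exact absurd h0 (b.ne_zero A)
      rw [this]; exact hd
    have : (f.restrictScalars k) = c • LinearMap.id := b.ext fun d => by simpa using hall d
    intro m
    exact LinearMap.congr_fun this m
  have hex : ∀ f : M →ₗ[MvPolynomial (Fin n) k] M,
        (∀ d : Fin n → ℤ, ∀ m ∈ gr (k := k) b d, f m ∈ gr (k := k) b d) →
          ∃ c : k, f (b A) = c • b A := by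
    intro f hf
    obtain ⟨c, hc⟩ := (gr_mem b A _).1 (hf a (b A) ((gr_mem b A _).2 ⟨1, one_smul _ _⟩))
    exact ⟨c, hc.symm⟩
  refine ⟨gr (k := k) b, gr_internal b, ?_, ?_, ?_, ?_, ?_⟩
  · intro i d m hm
    by_cases hd : d ∈ dom T
    · obtain ⟨c, rfl⟩ := (gr_mem b ⟨d, hd⟩ m).1 hm
      rw [← algebraMap_smul (MvPolynomial (Fin n) k) c, smul_comm, algebraMap_smul]
      exact Submodule.smul_mem _ _ (hX ⟨d, hd⟩ i)
    · rw [gr_neg _ _ hd, Submodule.mem_bot] at hm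
      rw [hm, smul_zero]
      exact zero_mem _
  · intro d
    constructor
    · intro hd
      rw [gr_pos (k := k) b ⟨d, hd⟩]
      exact finrank_span_singleton (b.ne_zero _)
    · intro hd
      rw [gr_neg _ _ hd]
      simp
  · intro f hf
    obtain ⟨c, hc⟩ := hex f hf
    exact ⟨c, hscal f hf c hc⟩
  · intro f₁ f₂ h₁ h₂ h
    obtain ⟨c, hc⟩ := hex f₁ h₁
    have hc2 := hc
    rw [h (b A) ((gr_mem b A _).2 ⟨1, one_smul _ _⟩)] at hc2
    ext m
    rw [hscal f₁ h₁ c hc, hscal f₂ h₂ c hc2]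
  · intro φ
    have hA : b A ∈ gr (k := k) b a := (gr_mem b A _).2 ⟨1, one_smul _ _⟩
    obtain ⟨c, hc⟩ := (gr_mem b A _).1 (φ ⟨b A, hA⟩).2
    refine ⟨(algebraMap k (MvPolynomial (Fin n) k) c) • LinearMap.id, ?_, ?_⟩
    · intro d m hm
      rw [LinearMap.smul_apply, LinearMap.id_apply, algebraMap_smul]
      exact Submodule.smul_mem _ _ hm
    · intro m hm
      obtain ⟨c', rfl⟩ := (gr_mem b A _).1 hm
      rw [LinearMap.smul_apply, LinearMap.id_apply, algebraMap_smul]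
      have : (⟨c' • b A, hm⟩ : gr (k := k) b a) = c' • ⟨b A, hA⟩ := rfl
      rw [this, map_smul, Submodule.coe_smul, ← hc, smul_comm]

end
end LCaux

/-- Every `ℤⁿ`-graded `R`-module endomorphism of `H^l_{p_a}(R)` (`a ∈ Ω`, `l = |a|`) is
multiplication by a scalar of `k`; more precisely, restriction of graded endomorphisms to
the (1-dimensional) degree-`a` component is a bijection onto its `k`-linear endomorphisms.
The canonical grading is encoded as an internal compatible decomposition whose
homogeneous components have the canonical dimensions. -/
theorem stmt_4 (n : ℕ) (k : Type) [Field k] (a : Fin n → ℤ) (ha : isOm a)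
    [Module k (LC k (faceIdeal k a) (wt a))]
    [IsScalarTower k (MvPolynomial (Fin n) k) (LC k (faceIdeal k a) (wt a))] :
    ∃ g : (Fin n → ℤ) → Submodule k (LC k (faceIdeal k a) (wt a)),
      DirectSum.IsInternal g ∧ GradingCompat k _ g ∧
      (∀ d : Fin n → ℤ, Module.finrank k (g d) =
        if (∀ i, (a i = -1 → d i < 0) ∧ (a i = 0 → 0 ≤ d i)) then 1 else 0) ∧
      -- every graded endomorphism is multiplication by a scalar of `k`
      (∀ f : LC k (faceIdeal k a) (wt a) →ₗ[MvPolynomial (Fin n) k] LC k (faceIdeal k a) (wt a),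
        (∀ d : Fin n → ℤ, ∀ m ∈ g d, f m ∈ g d) → ∃ c : k, ∀ m, f m = c • m) ∧
      -- restriction to the degree-`a` component is injective on graded endomorphisms …
      (∀ f₁ f₂ : LC k (faceIdeal k a) (wt a) →ₗ[MvPolynomial (Fin n) k] LC k (faceIdeal k a) (wt a),
        (∀ d : Fin n → ℤ, ∀ m ∈ g d, f₁ m ∈ g d) →
        (∀ d : Fin n → ℤ, ∀ m ∈ g d, f₂ m ∈ g d) →
        (∀ m ∈ g a, f₁ m = f₂ m) → f₁ = f₂) ∧
      -- … and surjective onto `k`-linear endomorphisms of the degree-`a` component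
      (∀ φ : ↥(g a) →ₗ[k] ↥(g a),
        ∃ f : LC k (faceIdeal k a) (wt a) →ₗ[MvPolynomial (Fin n) k] LC k (faceIdeal k a) (wt a),
          (∀ d : Fin n → ℤ, ∀ m ∈ g d, f m ∈ g d) ∧
          ∀ m (hm : m ∈ g a), f m = (φ ⟨m, hm⟩ : LC k (faceIdeal k a) (wt a))) := by
  let T : Finset (Fin n) := Finset.univ.filter fun i => a i = -1
  have hT : ∀ i, i ∈ T ↔ a i = -1 := fun i => by simp [T]
  have haT : ∀ i, (i ∈ T → a i = -1) ∧ (i ∉ T → a i = 0) := by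
    intro i
    rw [hT]
    exact ⟨id, fun h => (ha i).resolve_right h⟩
  have hI : LCaux.idl k T = faceIdeal k a := by
    simp only [LCaux.idl, faceIdeal, hT]
  have he : Nonempty (LC k (faceIdeal k a) (wt a) ≃ₗ[MvPolynomial (Fin n) k]
      LCaux.Mon k (LCaux.dom T)) := by
    rw [← hI]
    exact LCaux.LC_equiv T
  obtain ⟨e⟩ := he
  obtain ⟨g, h1, h2, h3, h4⟩ := LCaux.final haT e
  refine ⟨g, h1, h2, ?_, h4⟩
  intro d
  have hd : d ∈ LCaux.dom T ↔ (∀ i, (a i = -1 → d i < 0) ∧ (a i = 0 → 0 ≤ d i)) := by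
    refine forall_congr' fun i => ?_
    rw [hT]
    rcases ha i with h | h <;> simp [h]
  by_cases h : d ∈ LCaux.dom T
  · rw [if_pos (hd.1 h)]
    exact (h3 d).1 h
  · rw [if_neg (fun h' => h (hd.2 h'))]
    exact (h3 d).2 h
end

section
/- Let M_1 = H^l_{p_α}(R)^{⊕k_1} and M_2 = H^l_{p_α}(R)^{⊕k_2} for a monomial prime p_α of height l and integers k_1, k_2 ≥ 0. The restriction map from the group of Z^n-graded R-module homomorphisms Hom(M_1, M_2) to the space of k-linear maps from (M_1)_α to (M_2)_α is a bijection, compatible with composition. -/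
open MvPolynomial

universe u

/-- Bare data of an augmented chain complex of modules. -/
structure Cx (R : Type u) [CommRing R] where
  X : ℕ → ModuleCat.{u} R
  d : ∀ m, X (m+1) →ₗ[R] X m
  ε : X 0 →ₗ[R] R

namespace Cx
variable {R : Type u} [CommRing R]

/-- The modules of the cone. -/
def coneX (K : Cx R) : ℕ → ModuleCat.{u} R
  | 0 => K.X 0
  | m+1 => ModuleCat.of R (K.X (m+1) × K.X m)

/-- The differential of the cone of multiplication by `x`. -/
def coned (K : Cx R) (x : R) : ∀ m, K.coneX (m+1) →ₗ[R] K.coneX m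
  | 0 => ((K.d 0).coprod (x • LinearMap.id) : (K.X 1 × K.X 0) →ₗ[R] K.X 0)
  | m+1 => (((K.d (m+1)).coprod (x • LinearMap.id)).prod
      (-(K.d m) ∘ₗ LinearMap.snd R _ _) : (K.X (m+2) × K.X (m+1)) →ₗ[R] (K.X (m+1) × K.X m))

/-- The cone of multiplication by `x`. -/
def cone (x : R) (K : Cx R) : Cx R where
  X := K.coneX
  d := K.coned x
  ε := K.ε

/-- The modules of the base complex. -/
def baseX (R : Type u) [CommRing R] : ℕ → ModuleCat.{u} R
  | 0 => ModuleCat.of R R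
  | _+1 => ModuleCat.of R PUnit

/-- The complex `R` in degree zero. -/
def base (R : Type u) [CommRing R] : Cx R where
  X := baseX R
  d := fun _ => 0
  ε := (LinearMap.id : R →ₗ[R] R)

/-- The Koszul complex on the `t`-th powers of a list of elements. -/
def kos (t : ℕ) : List R → Cx R
  | [] => base R
  | v :: vs => cone (v ^ t) (kos t vs)

/-- The top-degree identification. -/
def top (t : ℕ) : ∀ vs : List R, (kos t vs).X vs.length →ₗ[R] R
  | [] => (LinearMap.id : R →ₗ[R] R)
  | _ :: vs => ((top t vs) ∘ₗ LinearMap.snd R _ _ :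
      ((kos t vs).X (vs.length + 1) × (kos t vs).X vs.length) →ₗ[R] R)

/-- The ideal generated by `t`-th powers. -/
def powIdeal (t : ℕ) : List R → Ideal R
  | [] => ⊥
  | v :: vs => Ideal.span {v ^ t} ⊔ powIdeal t vs

/-- Weak regularity of a list of powers. -/
def Reg (t : ℕ) : List R → Prop
  | [] => True
  | v :: vs => (∀ r, v ^ t * r ∈ powIdeal t vs → r ∈ powIdeal t vs) ∧ Reg t vs

/-- Exactness of the augmented complex, resolving `R/J`. -/
structure IsRes (K : Cx R) (J : Ideal R) : Prop where
  proj : ∀ m, Module.Projective R (K.X m)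
  surj : Function.Surjective K.ε
  exact0 : ∀ y, K.ε y ∈ J ↔ ∃ z, K.d 0 z = y
  exact : ∀ m y, K.d m y = 0 ↔ ∃ z, K.d (m+1) z = y

lemma isRes_base : IsRes (base R) ⊥ where
  proj m := by
    cases m
    · exact (inferInstance : Module.Projective R R)
    · exact (inferInstance : Module.Projective R PUnit.{u+1})
  surj := fun x => ⟨x, rfl⟩
  exact0 y := by
    constructor
    · intro h; exact ⟨0, Eq.symm h⟩
    · rintro ⟨z, rfl⟩; exact rfl
  exact m y := by
    constructor
    · intro h; exact ⟨0, Subsingleton.elim (α := PUnit) _ _⟩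
    · rintro ⟨z, rfl⟩; exact rfl

lemma isRes_cone {K : Cx R} {J : Ideal R} (h : IsRes K J) (x : R)
    (hx : ∀ r, x * r ∈ J → r ∈ J) : IsRes (cone x K) (Ideal.span {x} ⊔ J) where
  proj m := by
    have := h.proj
    cases m with
    | zero => exact this 0
    | succ m => exact (inferInstance : Module.Projective R (K.X (m+1) × K.X m))
  surj := h.surj
  exact0 := by
    change ∀ y : K.X 0, K.ε y ∈ _ ↔ ∃ z : K.X 1 × K.X 0, K.d 0 z.1 + x • z.2 = y
    intro y
    constructor
    · intro hy
      obtain ⟨u, hu, j, hj, e⟩ := Submodule.mem_sup.1 hy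
      obtain ⟨r, rfl⟩ := Ideal.mem_span_singleton'.1 hu
      obtain ⟨b, rfl⟩ := h.surj r
      obtain ⟨z, hz⟩ := (h.exact0 (y - x • b)).1 (by
        rw [map_sub, map_smul, ← e, smul_eq_mul, mul_comm x, add_sub_cancel_left]; exact hj)
      exact ⟨(z, b), by simp [hz]⟩
    · rintro ⟨z, rfl⟩
      rw [map_add, map_smul, smul_eq_mul, add_comm]
      exact Submodule.add_mem_sup (Ideal.mul_mem_right _ _ (Ideal.mem_span_singleton_self x))
        ((h.exact0 _).2 ⟨_, rfl⟩)
  exact m y := by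
    cases m with
    | zero =>
      obtain ⟨a, b⟩ := (y : K.X 1 × K.X 0)
      change K.d 0 a + x • b = 0 ↔ ∃ z : K.X 2 × K.X 1, 
        (K.d 1 z.1 + x • z.2, - K.d 0 z.2) = (a, b)
      constructor
      · intro e
        have hb : K.ε b ∈ J := by
          apply hx
          rw [← smul_eq_mul, ← map_smul, eq_neg_of_add_eq_zero_right e, map_neg]
          exact neg_mem ((h.exact0 _).2 ⟨_, rfl⟩)
        obtain ⟨b', rfl⟩ := (h.exact0 b).1 hb
        obtain ⟨a', ha'⟩ := (h.exact 0 (a + x • b')).1 (by simp [e])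
        exact ⟨(a', -b'), by simp [ha']⟩
      · rintro ⟨z, hz⟩
        obtain ⟨rfl, rfl⟩ := Prod.ext_iff.1 hz
        have := (h.exact 0 (K.d 1 z.1)).2 ⟨_, rfl⟩
        simp at this ⊢
        simp [this]
    | succ m =>
      obtain ⟨a, b⟩ := (y : K.X (m+2) × K.X (m+1))
      change (K.d (m+1) a + x • b, - K.d m b) = ((0, 0) : K.X (m+1) × K.X m) ↔ 
        ∃ z : K.X (m+3) × K.X (m+2), 
        (K.d (m+2) z.1 + x • z.2, - K.d (m+1) z.2) = (a, b)
      constructor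
      · intro e
        obtain ⟨e, hb⟩ := Prod.ext_iff.1 e
        simp only [neg_eq_zero] at hb e
        obtain ⟨b', rfl⟩ := (h.exact _ b).1 hb
        obtain ⟨a', ha'⟩ := (h.exact _ (a + x • b')).1 (by simp [e])
        exact ⟨(a', -b'), by simp [ha']⟩
      · rintro ⟨z, hz⟩
        obtain ⟨rfl, rfl⟩ := Prod.ext_iff.1 hz
        have := (h.exact _ (K.d (m+2) z.1)).2 ⟨_, rfl⟩
        have h2 := (h.exact _ (K.d (m+1) z.2)).2 ⟨_, rfl⟩
        simp at this h2 ⊢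
        simp [this, h2]

variable (t : ℕ)

lemma isRes_kos : ∀ xs : List R, Reg t xs → IsRes (kos t xs) (powIdeal t xs)
  | [], _ => isRes_base
  | x :: xs, h => isRes_cone (isRes_kos xs h.2) (x ^ t) h.1

lemma subsingleton_kos : ∀ (xs : List R) (m : ℕ), xs.length < m → Subsingleton ((kos t xs).X m)
  | [], m+1, _ => (inferInstance : Subsingleton PUnit)
  | x :: xs, m+1, h => by
    have h1 := subsingleton_kos xs (m+1) (by simp at h; omega)
    have h2 := subsingleton_kos xs m (by simpa using h)
    exact (inferInstance : Subsingleton ((kos t xs).X (m+1) × (kos t xs).X m))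

lemma top_bijective : ∀ xs : List R, Function.Bijective (top t xs)
  | [] => Function.bijective_id
  | x :: xs => by
    have h1 := subsingleton_kos t xs (xs.length+1) (by simp)
    have h := top_bijective xs
    constructor
    · intro u v e
      exact Prod.ext (Subsingleton.elim _ _) (h.1 e)
    · intro r
      obtain ⟨b, hb⟩ := h.2 r
      exact ⟨((0, b) : (kos t xs).X (xs.length+1) × (kos t xs).X xs.length), hb⟩

/-- Coboundaries. -/
def IsBd (K : Cx R) : ∀ {l : ℕ}, (K.X l →ₗ[R] R) → Prop
  | 0, f => f = 0
  | l+1, f => ∃ g : K.X l →ₗ[R] R, g ∘ₗ K.d l = f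

lemma isBd_kos : ∀ (xs : List R) (r : R), IsBd (kos t xs) (r • top t xs) ↔ r ∈ powIdeal t xs
  | [], r => by
    change r • (LinearMap.id : R →ₗ[R] R) = 0 ↔ r ∈ (⊥ : Ideal R)
    rw [Ideal.mem_bot]
    constructor
    · intro h
      have := LinearMap.congr_fun h (1 : R)
      simpa using this
    · rintro rfl
      exact zero_smul _ _
  | [x], r => by
    change (∃ g : R →ₗ[R] R, g ∘ₗ ((0 : PUnit.{u+1} →ₗ[R] R).coprod (x ^ t • (LinearMap.id : R →ₗ[R] R))) = 
      r • (LinearMap.id ∘ₗ LinearMap.snd R PUnit.{u+1} R)) ↔ r ∈ Ideal.span {x ^ t} ⊔ (⊥ : Ideal R)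
    rw [sup_bot_eq, Ideal.mem_span_singleton']
    constructor
    · rintro ⟨g, hg⟩
      have := LinearMap.congr_fun hg (0, 1)
      refine ⟨g 1, ?_⟩
      simp only [LinearMap.comp_apply, LinearMap.coprod_apply, LinearMap.smul_apply, 
        LinearMap.snd_apply, LinearMap.id_apply, map_zero, zero_add, map_smul, smul_eq_mul,
        mul_one] at this
      rw [← this, mul_comm, ← smul_eq_mul, ← map_smul, smul_eq_mul, mul_one]
    · rintro ⟨c, rfl⟩
      refine ⟨c • LinearMap.id, ?_⟩
      ext <;> simp
  | x :: y :: ys, r => by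
    change _ ↔ r ∈ Ideal.span {x ^ t} ⊔ powIdeal t (y :: ys)
    have ih := isBd_kos (y :: ys)
    generalize hI : powIdeal t (y :: ys) = I at *
    generalize hv : x ^ t = v
    set K := kos t (y :: ys) with hK
    set T : K.X (ys.length + 1) →ₗ[R] R := top t (y :: ys) with hT
    have hs : Subsingleton (K.X (ys.length + 2)) := subsingleton_kos t (y :: ys) _ (by simp)
    obtain ⟨T', hT'⟩ : ∃ T' : R →ₗ[R] K.X (ys.length + 1), ∀ z, T' (T z) = z :=
      ⟨(LinearEquiv.ofBijective T (top_bijective t (y :: ys))).symm.toLinearMap,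
        fun z => (LinearEquiv.ofBijective T (top_bijective t (y :: ys))).symm_apply_apply z⟩
    have e : IsBd (kos t (x :: y :: ys)) (r • top t (x :: y :: ys)) ↔ 
      (∃ g : (K.X (ys.length + 1) × K.X ys.length) →ₗ[R] R, 
      g ∘ₗ (((K.d (ys.length+1)).coprod (v • LinearMap.id)).prod
      (-(K.d ys.length) ∘ₗ LinearMap.snd R _ _)) = r • (T ∘ₗ LinearMap.snd R _ _)) := by
      subst hv; exact Iff.rfl
    rw [e]
    have ih' : ∀ r : R, (∃ g : K.X ys.length →ₗ[R] R, g ∘ₗ K.d ys.length = r • T) ↔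
      r ∈ I := ih
    constructor
    · rintro ⟨g, hg⟩
      have h1 : ∀ b, g (v • b, - K.d _ b) = r * T b := fun b => by
        have := LinearMap.congr_fun hg (0, b)
        simpa using this
      set c := g (T' 1, 0) with hc
      have h3 : ∀ b, g (b, 0) = c * T b := fun b => by
        conv_lhs => rw [← hT' b, ← mul_one (T b), ← smul_eq_mul, map_smul]
        have : ((T b • T' 1, 0) : K.X (ys.length + 1) × K.X ys.length) = T b • (T' 1, 0) := by
          ext <;> simp
        rw [this, map_smul, smul_eq_mul, mul_comm]
      have h2 : r - v * c ∈ I := by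
        rw [← ih']
        refine ⟨- g ∘ₗ LinearMap.inr R _ _, ?_⟩
        ext b
        have e : ((v • b, - K.d _ b) : K.X (ys.length + 1) × K.X ys.length) 
          = v • (b, 0) - (0, K.d _ b) := by ext <;> simp
        have := h1 b
        rw [e, map_sub, map_smul, h3] at this
        simp only [smul_eq_mul] at this
        simp
        linear_combination this
      have : r = v * c + (r - v * c) := by ring
      rw [this]
      exact Submodule.add_mem_sup (Ideal.mul_mem_right _ _ (Ideal.mem_span_singleton_self v)) h2
    · intro hr
      obtain ⟨u, hu, j, hj, rfl⟩ := Submodule.mem_sup.1 hr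
      obtain ⟨c, rfl⟩ := Ideal.mem_span_singleton'.1 hu
      obtain ⟨g, hg⟩ := (ih' j).2 hj
      refine ⟨(c • T).coprod (-g), ?_⟩
      refine LinearMap.ext fun ⟨z, w⟩ => ?_
      have := LinearMap.congr_fun hg w
      simp at this
      simp [this, Subsingleton.elim z 0]
      ring

lemma exists_map (t u : ℕ) : ∀ vs : List R, ∃ φ : ∀ m, (kos (t+u) vs).X m →ₗ[R] (kos t vs).X m, 
    (∀ m z, (kos t vs).d m (φ (m+1) z) = φ m ((kos (t+u) vs).d m z)) ∧
    (∀ z, (kos t vs).ε (φ 0 z) = (kos (t+u) vs).ε z) ∧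
    (∀ z, top t vs (φ _ z) = vs.prod ^ u * top (t+u) vs z)
  | [] => ⟨fun m => LinearMap.id, fun m z => rfl, fun z => rfl, fun z => by
      simp; rfl⟩
  | v :: vs => by
    obtain ⟨φ, h1, h2, h3⟩ := exists_map t u vs
    let ψ : ∀ m, (kos (t+u) (v :: vs)).X m →ₗ[R] (kos t (v :: vs)).X m
      | 0 => φ 0
      | m+1 => ((φ (m+1)).prodMap (v ^ u • φ m) : 
          ((kos (t+u) vs).X (m+1) × (kos (t+u) vs).X m) →ₗ[R] 
            ((kos t vs).X (m+1) × (kos t vs).X m))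
    refine ⟨ψ, ?_, h2, ?_⟩
    · intro m z
      cases m with
      | zero =>
        obtain ⟨z, w⟩ := (z : (kos (t+u) vs).X 1 × (kos (t+u) vs).X 0)
        change (kos t vs).d 0 (φ 1 z) + v ^ t • (v ^ u • φ 0 w) = 
          φ 0 ((kos (t+u) vs).d 0 z + v^(t+u) • w)
        rw [h1, map_add, map_smul, pow_add, mul_smul]
      | succ m =>
        obtain ⟨z, w⟩ := (z : (kos (t+u) vs).X (m+2) × (kos (t+u) vs).X (m+1))
        refine Prod.ext (?_ : (kos t vs).d (m+1) (φ (m+2) z) + v ^ t • (v ^ u • φ (m+1) w) =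
          φ (m+1) ((kos (t+u) vs).d (m+1) z + v^(t+u) • w)) 
          (?_ : - (kos t vs).d m (v^u • φ (m+1) w)
          = v^u • φ m (- (kos (t+u) vs).d m w))
        · rw [h1, map_add, map_smul, pow_add, mul_smul]
        · rw [map_smul, h1, map_neg, smul_neg]
    · intro z
      obtain ⟨z, w⟩ := (z : (kos (t+u) vs).X (vs.length+1) × (kos (t+u) vs).X vs.length)
      change top t vs (v ^ u • φ _ w) = _ * top (t+u) vs w
      rw [map_smul, h3, smul_eq_mul, List.prod_cons, mul_pow, mul_assoc]

end Cx
open CategoryTheory Limits Opposite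

noncomputable section
namespace ExtTop

section generic
variable {C D : Type*} [Category C] [Abelian C] [HasProjectiveResolutions C] 
  [Category D] [Abelian D] (F : C ⥤ D) [F.Additive] {X X' : C}

/-- Image complex -/
abbrev Kc (P : ProjectiveResolution X) := (F.mapHomologicalComplex (ComplexShape.down ℕ)).obj P.complex

lemma hd (P : ProjectiveResolution X) (l : ℕ) (h : P.complex.d (l+1) l = 0) : 
    (Kc F P).d (l+1) l = 0 := by
  have : F.map (P.complex.d (l+1) l) = 0 := by rw [h, Functor.map_zero]
  exact this

/-- homology computing the derived functor -/
def isoL (P : ProjectiveResolution X) (l : ℕ) : (Kc F P).homology l ≅ (F.leftDerived l).obj X :=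
  (P.isoLeftDerivedObj F l).symm

lemma isoL_nat (P : ProjectiveResolution X) (P' : ProjectiveResolution X') (l : ℕ)
    (f : X' ⟶ X) (φ : P'.complex ⟶ P.complex) (comm : φ.f 0 ≫ P.π.f 0 = P'.π.f 0 ≫ f) :
    (isoL F P' l).hom ≫ (F.leftDerived l).map f = 
      HomologicalComplex.homologyMap ((F.mapHomologicalComplex _).map φ) l ≫ (isoL F P l).hom :=
  ProjectiveResolution.isoLeftDerivedObj_inv_naturality f P' P φ comm F l

/-- cycles computing the derived functor -/
def isoC (P : ProjectiveResolution X) (l : ℕ) (h : P.complex.d (l+1) l = 0) : 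
    (Kc F P).cycles l ≅ (F.leftDerived l).obj X :=
  (Kc F P).isoHomologyπ (l+1) l (by simp) (hd F P l h) ≪≫ isoL F P l

/-- cocycle-to-class map, top degree, opposite category -/
def rhoOp (P : ProjectiveResolution X) (l : ℕ) (h : P.complex.d (l+1) l = 0) : 
    (F.leftDerived l).obj X ⟶ (Kc F P).X l :=
  (isoC F P l h).inv ≫ (Kc F P).iCycles l

instance (P : ProjectiveResolution X) (l : ℕ) (h : P.complex.d (l+1) l = 0) : 
    Mono (rhoOp F P l h) := by unfold rhoOp; infer_instance

lemma rhoOp_nat (P : ProjectiveResolution X) (P' : ProjectiveResolution X') (l : ℕ)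
    (h : P.complex.d (l+1) l = 0) (h' : P'.complex.d (l+1) l = 0)
    (f : X' ⟶ X) (φ : P'.complex ⟶ P.complex) (comm : φ.f 0 ≫ P.π.f 0 = P'.π.f 0 ≫ f) :
    (F.leftDerived l).map f ≫ rhoOp F P l h = rhoOp F P' l h' ≫ ((F.mapHomologicalComplex _).map φ).f l := by
  unfold rhoOp
  rw [← cancel_epi (isoC F P' l h').hom]
  simp only [← Category.assoc, Iso.hom_inv_id, Category.id_comp]
  have : (Kc F P').iCycles l ≫ ((F.mapHomologicalComplex _).map φ).f l = 
    HomologicalComplex.cyclesMap ((F.mapHomologicalComplex _).map φ) l ≫ (Kc F P).iCycles l := by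
    rw [HomologicalComplex.cyclesMap_i]
  rw [this]
  congr 1
  rw [Iso.comp_inv_eq]
  simp only [isoC, Iso.trans_hom, Category.assoc, 
    HomologicalComplex.isoHomologyπ_hom]
  rw [isoL_nat F P P' l f φ comm]
  simp only [← Category.assoc]
  congr 1
  exact (HomologicalComplex.homologyπ_naturality _ _)

lemma rhoOp_d (P : ProjectiveResolution X) (l m : ℕ) (h : P.complex.d (l+1) l = 0) :
    rhoOp F P l h ≫ (Kc F P).d l m = 0 := by
  rw [rhoOp, Category.assoc, HomologicalComplex.iCycles_d, comp_zero]

lemma rhoOp_exact (P : ProjectiveResolution X) (l m : ℕ) 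
    (hm : (ComplexShape.down ℕ).next l = m) (h : P.complex.d (l+1) l = 0) :
    (ShortComplex.mk _ _ (rhoOp_d F P l m h)).Exact := by
  apply ShortComplex.exact_of_f_is_kernel
  exact IsLimit.ofIsoLimit ((Kc F P).cyclesIsKernel l m hm) 
    (Fork.ext (isoC F P l h) (by
      change (isoC F P l h).hom ≫ (isoC F P l h).inv ≫ (Kc F P).iCycles l = (Kc F P).iCycles l
      rw [Iso.hom_inv_id_assoc]))

end generic

variable {R : Type u} [CommRing R] {X X' : ModuleCat.{u} R} (Y : ModuleCat.{u} R)

/-- The contravariant Hom functor. -/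
abbrev HF : ModuleCat.{u} R ⥤ (ModuleCat.{u} R)ᵒᵖ := ((linearYoneda R (ModuleCat.{u} R)).obj Y).rightOp

/-- cocycle-to-class map, top degree -/
def rho (P : ProjectiveResolution X) (l : ℕ) (h : P.complex.d (l+1) l = 0) : 
    ModuleCat.of R (P.complex.X l ⟶ Y) ⟶ ((Ext R (ModuleCat.{u} R) l).obj (op X)).obj Y :=
  (rhoOp (HF Y) P l h).unop

lemma rho_surj (P : ProjectiveResolution X) (l : ℕ) (h : P.complex.d (l+1) l = 0) : 
    Function.Surjective (rho Y P l h) := by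
  rw [← ModuleCat.epi_iff_surjective]
  exact inferInstanceAs (Epi (rhoOp (HF Y) P l h).unop)

lemma rho_nat (P : ProjectiveResolution X) (P' : ProjectiveResolution X') (l : ℕ)
    (h : P.complex.d (l+1) l = 0) (h' : P'.complex.d (l+1) l = 0)
    (f : X' ⟶ X) (φ : P'.complex ⟶ P.complex) (comm : φ.f 0 ≫ P.π.f 0 = P'.π.f 0 ≫ f)
    (c : P.complex.X l ⟶ Y) :
    ((Ext R (ModuleCat.{u} R) l).map f.op).app Y (rho Y P l h c) = rho Y P' l h' (φ.f l ≫ c) := by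
  have key2 := congrArg (fun g => g.unop) (rhoOp_nat (HF Y) P P' l h h' f φ comm)
  exact ConcreteCategory.congr_hom key2 c

lemma rho_ker (P : ProjectiveResolution X) (l m : ℕ) (hm : (ComplexShape.down ℕ).next l = m)
    (h : P.complex.d (l+1) l = 0) (c : P.complex.X l ⟶ Y) : 
    rho Y P l h c = 0 ↔ ∃ g : P.complex.X m ⟶ Y, P.complex.d l m ≫ g = c := by
  have ex2 := (rhoOp_exact (HF Y) P l m hm h).unop
  rw [ShortComplex.moduleCat_exact_iff] at ex2
  constructor
  · intro hc
    exact ex2 c hc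
  · rintro ⟨g, rfl⟩
    exact ConcreteCategory.congr_hom 
      (ShortComplex.mk _ _ (rhoOp_d (HF Y) P l m h)).unop.zero g
end ExtTop
end

section
open CategoryTheory Limits Opposite

namespace Cx
noncomputable section
variable {R : Type u} [CommRing R] {K : Cx R} {J : Ideal R}

/-- The chain complex in `ModuleCat`. -/
def toComplex (K : Cx R) {J : Ideal R} (h : IsRes K J) : ChainComplex (ModuleCat.{u} R) ℕ :=
  ChainComplex.of K.X (fun m => ModuleCat.ofHom (K.d m)) (fun m => by
    ext z
    exact (h.exact m (K.d (m+1) z)).2 ⟨z, rfl⟩)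

lemma toComplex_d (h : IsRes K J) (m : ℕ) : 
    (toComplex K h).d (m+1) m = ModuleCat.ofHom (K.d m) := by
  exact ChainComplex.of_d K.X (fun m => ModuleCat.ofHom (K.d m)) m

/-- augmentation -/
def aug (K : Cx R) (J : Ideal R) : K.X 0 ⟶ ModuleCat.of R (R ⧸ J) :=
  ModuleCat.ofHom (J.mkQ ∘ₗ K.ε)

lemma aug_apply (z : K.X 0) : aug K J z = J.mkQ (K.ε z) := rfl

lemma d_aug (h : IsRes K J) : ModuleCat.ofHom (K.d 0) ≫ aug K J = 0 := by
  ext z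
  exact (Submodule.Quotient.mk_eq_zero J).2 ((h.exact0 _).2 ⟨z, rfl⟩)

lemma exact_aug (h : IsRes K J) : (ShortComplex.mk _ _ (d_aug h)).Exact := by
  rw [ShortComplex.moduleCat_exact_iff]
  intro z hz
  exact (h.exact0 z).1 ((Submodule.Quotient.mk_eq_zero J).1 hz)

lemma exact_succ (h : IsRes K J) (m : ℕ) : (toComplex K h).ExactAt (m+1) := by
  rw [HomologicalComplex.exactAt_iff' _ (m + 1 + 1) (m + 1) m (by simp) (by simp),
    ShortComplex.moduleCat_exact_iff]
  intro z hz
  have e1 : (toComplex K h).d (m+1) m z = 0 := hz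
  rw [toComplex_d] at e1
  obtain ⟨w, hw⟩ := (h.exact m z).1 e1
  refine ⟨w, ?_⟩
  change (toComplex K h).d (m+1+1) (m+1) w = z
  rw [toComplex_d]
  exact hw

/-- the augmentation as chain map -/
def augC (h : IsRes K J) : toComplex K h ⟶ (ChainComplex.single₀ _).obj (ModuleCat.of R (R ⧸ J)) :=
  (ChainComplex.toSingle₀Equiv _ _).symm ⟨aug K J, by
    rw [toComplex_d]; exact d_aug h⟩

lemma augC_f (h : IsRes K J) : (augC h).f 0 = aug K J := 
  ChainComplex.toSingle₀Equiv_symm_apply_f_zero _ _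

lemma quasi (h : IsRes K J) : QuasiIso (augC h) where
  quasiIsoAt n := by
    cases n with
    | zero =>
      rw [ChainComplex.quasiIsoAt₀_iff, ShortComplex.quasiIso_iff_of_zeros']
      · refine (ShortComplex.exact_and_epi_g_iff_of_iso ?_).2
          ⟨exact_aug h, ?_⟩
        · exact ShortComplex.isoMk (Iso.refl _) (Iso.refl _) (Iso.refl _)
            ((Category.id_comp _).trans ((toComplex_d h 0).symm.trans (Category.comp_id _).symm))
            ((Category.id_comp _).trans ((augC_f h).symm.trans (Category.comp_id _).symm))
        · rw [ModuleCat.epi_iff_surjective]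
          exact (Submodule.mkQ_surjective J).comp h.surj
      all_goals rfl
    | succ n =>
      rw [quasiIsoAt_iff_exactAt']
      · apply exact_succ
      · apply ChainComplex.exactAt_succ_single_obj

/-- The projective resolution. -/
def toRes (h : IsRes K J) : ProjectiveResolution (ModuleCat.of R (R ⧸ J)) where
  complex := toComplex K h
  projective m := by
    have := h.proj m
    exact inferInstanceAs (Projective (K.X m))
  π := augC h
  quasiIso := quasi h

lemma exists_hom {K' : Cx R} {J' : Ideal R} (h : IsRes K J) (h' : IsRes K' J')
    (φ : ∀ m, K'.X m →ₗ[R] K.X m) (hφ : ∀ m z, K.d m (φ (m+1) z) = φ m (K'.d m z))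
    (hε : ∀ z, K.ε (φ 0 z) = K'.ε z) (f : ModuleCat.of R (R ⧸ J') ⟶ ModuleCat.of R (R ⧸ J))
    (hf : ∀ r, f (J'.mkQ r) = J.mkQ r) : 
    ∃ Φ : (toRes h').complex ⟶ (toRes h).complex, 
      (Φ.f 0 ≫ (toRes h).π.f 0 = (toRes h').π.f 0 ≫ f) ∧
      ∀ m, Φ.f m = ModuleCat.ofHom (φ m) := by
  refine ⟨ChainComplex.ofHom (fun m => ModuleCat.ofHom (φ m)) fun m => ?_, ?_, fun m => rfl⟩
  · change ModuleCat.ofHom (φ (m+1)) ≫ (toComplex K h).d (m+1) m = 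
      (toComplex K' h').d (m+1) m ≫ ModuleCat.ofHom (φ m)
    rw [toComplex_d, toComplex_d]
    ext z
    exact hφ m z
  · change ModuleCat.ofHom (φ 0) ≫ (augC h).f 0 = (augC h').f 0 ≫ f
    rw [augC_f, augC_f]
    ext z
    change J.mkQ (K.ε (φ 0 z)) = f (J'.mkQ (K'.ε z))
    rw [hf, hε]

lemma exists_bd (h : IsRes K J) (l m : ℕ) (hm : (ComplexShape.down ℕ).next l = m)
    (c : K.X l →ₗ[R] R) :
    (∃ g : (toRes h).complex.X m ⟶ ModuleCat.of R R, 
      (toRes h).complex.d l m ≫ g = ModuleCat.ofHom c) ↔ IsBd K c := by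
  cases l with
  | zero => 
    change _ ↔ c = 0
    have hd : (toRes h).complex.d 0 m = 0 := 
      (toRes h).complex.shape 0 m (by simp)
    rw [hd]
    constructor
    · rintro ⟨g, hg⟩
      rw [zero_comp] at hg
      have := congrArg ModuleCat.Hom.hom hg
      exact this.symm
    · rintro rfl
      refine ⟨0, ?_⟩
      rw [zero_comp]; rfl
  | succ l =>
    obtain rfl : m = l := by rw [← hm]; simp
    change (∃ g : K.X m ⟶ ModuleCat.of R R, (toComplex K h).d (m+1) m ≫ g = ModuleCat.ofHom c) ↔ 
      ∃ g : K.X m →ₗ[R] R, g ∘ₗ K.d m = c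
    rw [toComplex_d]
    constructor
    · rintro ⟨g, hg⟩
      exact ⟨g.hom, congrArg ModuleCat.Hom.hom hg⟩
    · rintro ⟨g, rfl⟩
      exact ⟨ModuleCat.ofHom g, rfl⟩

lemma toRes_d (h : IsRes K J) (l : ℕ) (hs : Subsingleton (K.X (l+1))) : 
    (toRes h).complex.d (l+1) l = 0 := by
  change (toComplex K h).d (l+1) l = 0
  rw [toComplex_d]
  ext z
  rw [Subsingleton.elim z 0]
  exact map_zero _

/-- `R → Ext^l(R/J_t,R)` -/
def kap (t : ℕ) (vs : List R) (h : Reg t vs) : 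
    R →ₗ[R] ((Ext R (ModuleCat.{u} R) vs.length).obj 
      (op (ModuleCat.of R (R ⧸ powIdeal t vs)))).obj (ModuleCat.of R R) :=
  (ExtTop.rho (ModuleCat.of R R) (toRes (isRes_kos t vs h)) vs.length 
    (toRes_d _ _ (subsingleton_kos t vs _ (by simp)))).hom ∘ₗ
  ({ toFun := fun r => ModuleCat.ofHom (r • top t vs)
     map_add' := fun a b => by rw [add_smul]; rfl
     map_smul' := fun a b => by rw [smul_eq_mul, mul_smul]; rfl } : 
     R →ₗ[R] ((kos t vs).X vs.length ⟶ ModuleCat.of R R))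

lemma kap_apply (t : ℕ) (vs : List R) (h : Reg t vs) (r : R) : 
    kap t vs h r = ExtTop.rho (ModuleCat.of R R) (toRes (isRes_kos t vs h)) vs.length 
    (toRes_d _ _ (subsingleton_kos t vs _ (by simp))) (ModuleCat.ofHom (r • top t vs)) := rfl

lemma kap_surj (t : ℕ) (vs : List R) (h : Reg t vs) : Function.Surjective (kap t vs h) := by
  intro z
  obtain ⟨c, rfl⟩ := ExtTop.rho_surj (ModuleCat.of R R) (toRes (isRes_kos t vs h)) vs.length 
    (toRes_d _ _ (subsingleton_kos t vs _ (by simp))) z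
  let c' : (kos t vs).X vs.length →ₗ[R] R := ModuleCat.Hom.hom c
  let e := LinearEquiv.ofBijective _ (top_bijective t vs)
  refine ⟨c' (e.symm 1), ?_⟩
  rw [kap_apply]
  congr 1
  change _ = ModuleCat.ofHom c'
  congr 1
  ext w
  have : w = top t vs w • e.symm 1 := by
    rw [← map_smul, smul_eq_mul, mul_one]
    exact (e.symm_apply_apply w).symm
  conv_rhs => rw [this, map_smul]
  simp [mul_comm]

lemma kap_ker (t : ℕ) (vs : List R) (h : Reg t vs) (r : R) : 
    kap t vs h r = 0 ↔ r ∈ powIdeal t vs := by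
  rw [← isBd_kos t vs r, ← exists_bd (isRes_kos t vs h) _ _ rfl, kap_apply]
  exact ExtTop.rho_ker (ModuleCat.of R R) _ _ _ rfl _ _

lemma kap_nat (t u : ℕ) (vs : List R) (h : Reg t vs) (h' : Reg (t+u) vs) 
    (f : ModuleCat.of R (R ⧸ powIdeal (t+u) vs) ⟶ ModuleCat.of R (R ⧸ powIdeal t vs))
    (hf : ∀ r, f ((powIdeal (t+u) vs).mkQ r) = (powIdeal t vs).mkQ r) (r : R) :
    ((Ext R (ModuleCat.{u} R) vs.length).map f.op).app (ModuleCat.of R R) (kap t vs h r) = 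
      kap (t+u) vs h' (vs.prod ^ u * r) := by
  obtain ⟨φ, h1, h2, h3⟩ := exists_map t u vs
  obtain ⟨Φ, hΦ, hm⟩ := exists_hom (isRes_kos t vs h) (isRes_kos _ vs h') φ h1 h2 f hf
  refine (ExtTop.rho_nat (ModuleCat.of R R) (toRes (isRes_kos t vs h)) (toRes (isRes_kos _ vs h'))
    _ (toRes_d (isRes_kos _ vs h) _ (subsingleton_kos _ vs _ (by simp)))
    (toRes_d (isRes_kos _ vs h') _ (subsingleton_kos _ vs _ (by simp))) f Φ hΦ
    (ModuleCat.ofHom (r • top t vs))).trans ?_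
  rw [kap_apply]
  congr 1
  rw [hm]
  change ModuleCat.ofHom ((r • top t vs) ∘ₗ φ _) = _
  congr 1
  ext z
  simp [h3]
  ring

end
end Cx
end

section
open CategoryTheory Limits Opposite localCohomology

namespace Cx
noncomputable section

lemma powIdeal_mono {R : Type} [CommRing R] {s t : ℕ} (h : s ≤ t) (vs : List R) :
    powIdeal t vs ≤ powIdeal s vs := by
  induction vs with
  | nil => exact le_rfl
  | cons v vs ih =>
    change Ideal.span {v ^ t} ⊔ powIdeal t vs ≤ Ideal.span {v ^ s} ⊔ powIdeal s vs
    refine sup_le_sup ?_ ih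
    rw [Ideal.span_singleton_le_span_singleton]
    exact pow_dvd_pow _ h

lemma pow_mem_powIdeal {R : Type} [CommRing R] (t : ℕ) (vs : List R) (v : R) (hv : v ∈ vs) :
    v ^ t ∈ powIdeal t vs := by
  induction vs with
  | nil => simp at hv
  | cons w vs ih =>
    change _ ∈ Ideal.span {w ^ t} ⊔ powIdeal t vs
    rcases List.mem_cons.1 hv with rfl | h
    · exact Ideal.mem_sup_left (Ideal.mem_span_singleton_self _)
    · exact Ideal.mem_sup_right (ih h)

lemma powIdeal_le {R : Type} [CommRing R] (t : ℕ) (vs : List R) (J : Ideal R)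
    (h : ∀ v ∈ vs, v ^ t ∈ J) : powIdeal t vs ≤ J := by
  induction vs with
  | nil => exact bot_le
  | cons w vs ih =>
    change Ideal.span {w ^ t} ⊔ powIdeal t vs ≤ J
    refine sup_le ?_ (ih fun v hv => h v (List.mem_cons_of_mem _ hv))
    rw [Ideal.span_singleton_le_iff_mem]
    exact h w (by simp)

/-- ideals generated by powers, as a diagram -/
def powDiagram {R : Type} [CommRing R] (vs : List R) : ℕᵒᵖ ⥤ Ideal R where
  obj t := powIdeal (unop t) vs
  map w := ⟨⟨powIdeal_mono w.unop.down.down vs⟩⟩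

variable {R : Type} [CommRing R]

/-- lifted diagram -/
def powToSelf (vs : List R) (I : Ideal R) (hI : I = Ideal.span {v | v ∈ vs}) :
    ℕᵒᵖ ⥤ SelfLERadical I :=
  ObjectProperty.lift _ (powDiagram vs) fun k => by
    change I ≤ (powIdeal (unop k) vs).radical
    rw [hI, Ideal.span_le]
    intro v hv
    exact ⟨unop k, pow_mem_powIdeal _ _ _ hv⟩

lemma powToSelf_initial [IsNoetherianRing R] (vs : List R) (I : Ideal R)
    (hI : I = Ideal.span {v | v ∈ vs}) : Functor.Initial (powToSelf vs I hI) where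
  out J' := by
    apply +allowSynthFailures zigzag_isConnected
    · obtain ⟨k, hk⟩ := Ideal.exists_pow_le_of_le_radical_of_fg J'.2
        (IsNoetherian.noetherian I)
      have hk' : powIdeal k vs ≤ J'.1 := by
        refine (powIdeal_le _ _ _ fun v hv => ?_).trans hk
        apply Ideal.pow_mem_pow
        rw [hI]
        exact Ideal.subset_span hv
      exact ⟨CostructuredArrow.mk (⟨⟨⟨hk'⟩⟩⟩ : (powToSelf vs I hI).obj (op k) ⟶ J')⟩
    · intro j1 j2
      apply Relation.ReflTransGen.single
      rcases le_total (unop j1.left) (unop j2.left) with h | h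
      · right; exact ⟨CostructuredArrow.homMk (homOfLE h).op rfl⟩
      · left; exact ⟨CostructuredArrow.homMk (homOfLE h).op rfl⟩

/-- the iso -/
def lcIso [IsNoetherianRing R] (vs : List R) (I : Ideal R)
    (hI : I = Ideal.span {v | v ∈ vs}) (i : ℕ) :
    colimit (diagram (powDiagram vs) i) ≅ localCohomology I i :=
  have := powToSelf_initial vs I hI
  (localCohomology.isoOfFinal.{0,0,0} (powToSelf vs I hI) (selfLERadicalDiagram I) i) ≪≫
    isoSelfLERadical I i

/-- legs -/
def leg [IsNoetherianRing R] (vs : List R) (I : Ideal R)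
    (hI : I = Ideal.span {v | v ∈ vs}) (h : ∀ t, Reg t vs) (t : ℕ) :
    R →ₗ[R] (localCohomology I vs.length).obj (ModuleCat.of R R) :=
  (((lcIso vs I hI vs.length).hom.app (ModuleCat.of R R)).hom ∘ₗ
    ((colimit.ι (diagram (powDiagram vs) vs.length) (op (op t))).app (ModuleCat.of R R)).hom) ∘ₗ
    kap t vs (h t)

/-- the evaluated diagram -/
abbrev evD (vs : List R) : (ℕᵒᵖ)ᵒᵖ ⥤ ModuleCat.{0} R :=
  diagram (powDiagram vs) vs.length ⋙ (evaluation _ _).obj (ModuleCat.of R R)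

lemma evD_map (vs : List R) (h : ∀ t, Reg t vs) (t u : ℕ) (f : (op (op t) : (ℕᵒᵖ)ᵒᵖ) ⟶ op (op (t+u)))
    (r : R) : (evD vs).map f (kap t vs (h t) r) = kap (t+u) vs (h (t+u)) (vs.prod ^ u * r) := 
  kap_nat t u vs (h t) (h (t+u)) ((ringModIdeals (powDiagram vs)).map f.unop) (fun r => rfl) r

lemma leg_trans [IsNoetherianRing R] (vs : List R) (I : Ideal R)
    (hI : I = Ideal.span {v | v ∈ vs}) (h : ∀ t, Reg t vs) (t u : ℕ) (r : R) :
    leg vs I hI h t r = leg vs I hI h (t+u) (vs.prod ^ u * r) := by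
  let f : (op (op t) : (ℕᵒᵖ)ᵒᵖ) ⟶ op (op (t+u)) := (homOfLE (Nat.le_add_right t u)).op.op
  have w := colimit.w (diagram (powDiagram vs) vs.length) f
  have w2 := congrArg (fun g => g.app (ModuleCat.of R R)) w
  have w3 := ConcreteCategory.congr_hom w2 (kap t vs (h t) r)
  have w4 := congrArg ((lcIso vs I hI vs.length).hom.app (ModuleCat.of R R)) w3
  refine w4.symm.trans ?_
  have e := evD_map vs h t u f r
  exact congrArg (fun z => ((lcIso vs I hI vs.length).hom.app (ModuleCat.of R R))
    (((colimit.ι (diagram (powDiagram vs) vs.length) (op (op (t+u)))).app (ModuleCat.of R R)) z)) e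

lemma lc_bij [IsNoetherianRing R] (vs : List R) (I : Ideal R)
    (hI : I = Ideal.span {v | v ∈ vs}) (i : ℕ) : 
    Function.Bijective ((lcIso vs I hI i).hom.app (ModuleCat.of R R)) := 
  ConcreteCategory.bijective_of_isIso _

/-- colimit -/
def evColim (vs : List R) := isColimitOfPreserves ((evaluation (ModuleCat.{0} R) (ModuleCat.{0} R)).obj (ModuleCat.of R R)) 
    (colimit.isColimit (diagram (powDiagram vs) vs.length))

lemma leg_surj [IsNoetherianRing R] (vs : List R) (I : Ideal R)
    (hI : I = Ideal.span {v | v ∈ vs}) (h : ∀ t, Reg t vs) 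
    (m : (localCohomology I vs.length).obj (ModuleCat.of R R)) : ∃ t r, leg vs I hI h t r = m := by
  obtain ⟨m', rfl⟩ := (lc_bij vs I hI _).2 m
  obtain ⟨j, y, hy⟩ := Concrete.isColimit_exists_rep _ (evColim vs) m'
  obtain ⟨r, rfl⟩ := kap_surj (unop (unop j)) vs (h _) y
  exact ⟨unop (unop j), r, congrArg ((lcIso vs I hI vs.length).hom.app (ModuleCat.of R R)) hy⟩

lemma leg_ker [IsNoetherianRing R] (vs : List R) (I : Ideal R)
    (hI : I = Ideal.span {v | v ∈ vs}) (h : ∀ t, Reg t vs) (t : ℕ) (r : R) :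
    leg vs I hI h t r = 0 ↔ ∃ u, vs.prod ^ u * r ∈ powIdeal (t+u) vs := by
  constructor
  · intro e
    have e1 : (colimit.ι (diagram (powDiagram vs) vs.length) (op (op t))).app (ModuleCat.of R R)
      (kap t vs (h t) r) = 0 := by
      apply (lc_bij vs I hI _).1
      exact e.trans (map_zero _).symm
    obtain ⟨k, f, g, hfg⟩ := Concrete.isColimit_exists_of_rep_eq (evD vs) (evColim vs) 
      (i := op (op t)) (j := op (op t)) (kap t vs (h t) r) (0 : (evD vs).obj _) (e1.trans (map_zero _).symm)
    have hk : t ≤ unop (unop k) := f.unop.unop.down.down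
    obtain ⟨u, hu⟩ := Nat.exists_eq_add_of_le hk
    obtain rfl : k = op (op (t+u)) := by rw [← hu]
    refine ⟨u, ?_⟩
    rw [← kap_ker _ _ (h (t+u)), ← evD_map vs h t u f r]
    exact hfg.trans (map_zero _)
  · rintro ⟨u, hu⟩
    rw [leg_trans vs I hI h t u]
    have e := congrArg (((lcIso vs I hI vs.length).hom.app (ModuleCat.of R R)).hom ∘ₗ
      ((colimit.ι (diagram (powDiagram vs) vs.length) (op (op (t+u)))).app
        (ModuleCat.of R R)).hom) ((kap_ker _ _ (h (t+u)) _).2 hu)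
    exact e.trans (map_zero _)

theorem lc_struct [IsNoetherianRing R] (vs : List R) (I : Ideal R)
    (hI : I = Ideal.span {v | v ∈ vs}) (h : ∀ t, Reg t vs) (l : ℕ) (hl : l = vs.length) : 
    ∃ ι : ℕ → (R →ₗ[R] (localCohomology I l).obj (ModuleCat.of R R)), 
      (∀ m, ∃ t r, ι t r = m) ∧ (∀ t u r, ι t r = ι (t+u) (vs.prod^u * r)) ∧ 
      (∀ t r, ι t r = 0 ↔ ∃ u, vs.prod^u * r ∈ powIdeal (t+u) vs) := by
  subst hl
  exact ⟨leg vs I hI h, leg_surj vs I hI h, leg_trans vs I hI h, leg_ker vs I hI h⟩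

end
end Cx
end

namespace PolySide
open Cx

variable {n : ℕ} {k : Type} [Field k]

lemma mem_pow (t : ℕ) (L : List (Fin n)) (p : MvPolynomial (Fin n) k) :
    p ∈ powIdeal t (L.map (MvPolynomial.X : Fin n → MvPolynomial (Fin n) k)) ↔
      ∀ m, MvPolynomial.coeff m p ≠ 0 → ∃ i ∈ L, t ≤ m i := by
  have key : powIdeal t (L.map (MvPolynomial.X : Fin n → MvPolynomial (Fin n) k)) =
      Ideal.span ((fun s => MvPolynomial.monomial s (1 : k)) ''
        {s | ∃ i ∈ L, s = Finsupp.single i t}) := by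
    apply le_antisymm
    · apply powIdeal_le
      intro v hv
      obtain ⟨i, hi, rfl⟩ := List.mem_map.1 hv
      apply Ideal.subset_span
      exact ⟨_, ⟨i, hi, rfl⟩, (MvPolynomial.X_pow_eq_monomial).symm⟩
    · rw [Ideal.span_le]
      rintro _ ⟨_, ⟨i, hi, rfl⟩, rfl⟩
      have := pow_mem_powIdeal t (L.map (MvPolynomial.X : Fin n → MvPolynomial (Fin n) k)) _
        (List.mem_map.2 ⟨i, hi, rfl⟩)
      rwa [MvPolynomial.X_pow_eq_monomial] at this
  rw [key, MvPolynomial.mem_ideal_span_monomial_image]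
  refine forall_congr' fun m => ?_
  rw [MvPolynomial.mem_support_iff]
  refine imp_congr_right fun _ => ?_
  constructor
  · rintro ⟨_, ⟨i, hi, rfl⟩, h⟩
    exact ⟨i, hi, by simpa using h i⟩
  · rintro ⟨i, hi, h⟩
    exact ⟨_, ⟨i, hi, rfl⟩, by simpa using h⟩

lemma reg (t : ℕ) (L : List (Fin n)) (hL : L.Nodup) :
    Reg t (L.map (MvPolynomial.X : Fin n → MvPolynomial (Fin n) k)) := by
  induction L with
  | nil => trivial
  | cons i L ih =>
    rw [List.nodup_cons] at hL
    refine ⟨fun r hr => ?_, ih hL.2⟩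
    rw [mem_pow] at hr ⊢
    intro m hm
    rw [MvPolynomial.X_pow_eq_monomial] at hr
    obtain ⟨j, hj, h⟩ := hr (Finsupp.single i t + m) (by
      rw [MvPolynomial.coeff_monomial_mul]; simpa using hm)
    refine ⟨j, hj, ?_⟩
    have hij : i ≠ j := by rintro rfl; exact hL.1 hj
    simpa [Finsupp.single_apply, hij] using h

lemma prod_eq (L : List (Fin n)) (hL : L.Nodup) : ∃ e : Fin n →₀ ℕ,
    (L.map (MvPolynomial.X : Fin n → MvPolynomial (Fin n) k)).prod = MvPolynomial.monomial e 1 ∧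
    (∀ i ∈ L, e i = 1) ∧ (∀ i, i ∉ L → e i = 0) := by
  induction L with
  | nil => exact ⟨0, by simp, by simp, by simp⟩
  | cons i L ih =>
    rw [List.nodup_cons] at hL
    obtain ⟨e, h1, h2, h3⟩ := ih hL.2
    refine ⟨Finsupp.single i 1 + e, ?_, ?_, ?_⟩
    · rw [List.map_cons, List.prod_cons, h1, MvPolynomial.X, MvPolynomial.monomial_mul, one_mul]
    · intro j hj
      rcases List.mem_cons.1 hj with rfl | hj
      · simp [h3 _ hL.1]
      · have hij : i ≠ j := by rintro rfl; exact hL.1 hj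
        simp [Finsupp.single_apply, hij, h2 j hj]
    · intro j hj
      rw [List.mem_cons, not_or] at hj
      simp [Finsupp.single_apply, Ne.symm hj.1, h3 j hj.2]

theorem lc_poly (a : Fin n → ℤ) :
    ∃ (ι : ℕ → (MvPolynomial (Fin n) k →ₗ[MvPolynomial (Fin n) k] LC k (faceIdeal k a) (wt a)))
      (e : Fin n →₀ ℕ), (∀ i, e i = if a i = -1 then 1 else 0) ∧
      (∀ m, ∃ t r, ι t r = m) ∧
      (∀ t u r, ι t r = ι (t + u) (MvPolynomial.monomial (u • e) 1 * r)) ∧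
      (∀ t r, ι t r = 0 ↔ ∀ m, MvPolynomial.coeff m r ≠ 0 → ∃ i, a i = -1 ∧ t ≤ m i) := by
  classical
  let L := (Finset.univ.filter fun i => a i = -1).toList
  have hL : L.Nodup := Finset.nodup_toList _
  have hm : ∀ i, i ∈ L ↔ a i = -1 := fun i => by simp [L]
  obtain ⟨e, h1, h2, h3⟩ := prod_eq (k := k) L hL
  have he : ∀ i, e i = if a i = -1 then 1 else 0 := fun i => by
    split_ifs with h
    · exact h2 i ((hm i).2 h)
    · exact h3 i (fun h' => h ((hm i).1 h'))
  obtain ⟨ι, i1, i2, i3⟩ := lc_struct (L.map (MvPolynomial.X : Fin n → MvPolynomial (Fin n) k))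
    (faceIdeal k a) (by
      rw [faceIdeal]; congr 1; ext v
      simp [hm]) (fun t => reg t L hL) (wt a) (by simp [L, wt])
  have hpow : ∀ u, (L.map (MvPolynomial.X : Fin n → MvPolynomial (Fin n) k)).prod ^ u =
      MvPolynomial.monomial (u • e) 1 := fun u => by
    rw [h1, MvPolynomial.monomial_pow, one_pow]
  refine ⟨ι, e, he, i1, fun t u r => ?_, fun t r => ?_⟩
  · rw [← hpow]; exact i2 t u r
  · rw [i3]
    constructor
    · rintro ⟨u, hu⟩ m hmr
      rw [hpow, mem_pow] at hu
      obtain ⟨i, hi, h⟩ := hu (u • e + m) (by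
        rw [MvPolynomial.coeff_monomial_mul]; simpa using hmr)
      refine ⟨i, (hm i).1 hi, ?_⟩
      simp [h2 i hi] at h
      omega
    · intro h
      refine ⟨0, ?_⟩
      rw [pow_zero, one_mul, add_zero, mem_pow]
      intro m hmr
      obtain ⟨i, hi, h⟩ := h m hmr
      exact ⟨i, (hm i).2 hi, h⟩

end PolySide

namespace PolySide

variable {n : ℕ} {k : Type} [Field k] {M : Type} [AddCommGroup M]
  [Module (MvPolynomial (Fin n) k) M] [Module k M] [IsScalarTower k (MvPolynomial (Fin n) k) M]

/-- the support region -/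
def Dg (a d : Fin n → ℤ) : Prop := ∀ i, (a i = -1 → d i < 0) ∧ (a i = 0 → 0 ≤ d i)

/-- shifted exponent -/
noncomputable def toMon (a : Fin n → ℤ) (t : ℕ) (d : Fin n → ℤ) : Fin n →₀ ℕ :=
  Finsupp.equivFunOnFinite.symm fun i => (d i + if a i = -1 then (t : ℤ) else 0).toNat

lemma toMon_apply (a : Fin n → ℤ) (t : ℕ) (d : Fin n → ℤ) (i : Fin n) :
    toMon a t d i = (d i + if a i = -1 then (t : ℤ) else 0).toNat := rfl

/-- a large enough shift -/
def t0 (d : Fin n → ℤ) : ℕ := ∑ i, (d i).natAbs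

lemma le_t0 (d : Fin n → ℤ) (i : Fin n) : -(t0 d : ℤ) ≤ d i := by
  have : (d i).natAbs ≤ t0 d :=
    Finset.single_le_sum (f := fun i => (d i).natAbs) (fun _ _ => Nat.zero_le _) (Finset.mem_univ i)
  omega

open Classical in
/-- the basis -/
noncomputable def Eb (a : Fin n → ℤ)
    (ι : ℕ → (MvPolynomial (Fin n) k →ₗ[MvPolynomial (Fin n) k] M)) (d : Fin n → ℤ) : M :=
  if Dg a d then ι (t0 d) (MvPolynomial.monomial (toMon a (t0 d) d) 1) else 0

variable {a : Fin n → ℤ} {ι : ℕ → (MvPolynomial (Fin n) k →ₗ[MvPolynomial (Fin n) k] M)}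
  {e : Fin n →₀ ℕ}

lemma iota_shift (ha : isOm a) (he : ∀ i, e i = if a i = -1 then 1 else 0)
    (h2 : ∀ t u r, ι t r = ι (t + u) (MvPolynomial.monomial (u • e) 1 * r))
    (d : Fin n → ℤ) (hd : Dg a d) (t u : ℕ) (ht : ∀ i, a i = -1 → 0 ≤ d i + t) :
    ι t (MvPolynomial.monomial (toMon a t d) 1) =
      ι (t + u) (MvPolynomial.monomial (toMon a (t + u) d) 1) := by
  rw [h2 t u, MvPolynomial.monomial_mul, one_mul]
  congr 2
  have : u • e + toMon a t d = toMon a (t + u) d := by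
    ext i
    simp only [Finsupp.add_apply, Finsupp.smul_apply, toMon_apply, he, smul_eq_mul]
    have := ht i
    have := hd i
    rcases ha i with h | h <;> simp [h] at * <;> omega
  rw [this]

lemma Eb_eq (ha : isOm a) (he : ∀ i, e i = if a i = -1 then 1 else 0)
    (h2 : ∀ t u r, ι t r = ι (t + u) (MvPolynomial.monomial (u • e) 1 * r))
    (d : Fin n → ℤ) (hd : Dg a d) (t : ℕ) (ht : ∀ i, a i = -1 → 0 ≤ d i + t) :
    Eb a ι d = ι t (MvPolynomial.monomial (toMon a t d) 1) := by
  rw [Eb, if_pos hd, iota_shift ha he h2 d hd (t0 d) t, iota_shift ha he h2 d hd t (t0 d) ht,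
    add_comm]
  intro i _
  have := le_t0 d i
  omega

lemma Eb_mon (ha : isOm a) (he : ∀ i, e i = if a i = -1 then 1 else 0)
    (h2 : ∀ t u r, ι t r = ι (t + u) (MvPolynomial.monomial (u • e) 1 * r))
    (h3 : ∀ t r, ι t r = 0 ↔ ∀ m, MvPolynomial.coeff m r ≠ 0 → ∃ i, a i = -1 ∧ t ≤ m i)
    (t : ℕ) (m : Fin n →₀ ℕ) :
    ι t (MvPolynomial.monomial m 1) =
      Eb a ι (fun i => (m i : ℤ) - if a i = -1 then (t : ℤ) else 0) := by
  by_cases hd : Dg a (fun i => (m i : ℤ) - if a i = -1 then (t : ℤ) else 0)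
  · rw [Eb_eq ha he h2 _ hd t]
    · congr 2
      have : m = toMon a t (fun i => (m i : ℤ) - if a i = -1 then (t : ℤ) else 0) := by
        ext i
        simp [toMon_apply]
      rw [← this]
    · intro i hi
      simp [hi]
  · rw [Eb, if_neg hd, h3]
    intro m' hm'
    rw [MvPolynomial.coeff_monomial] at hm'
    obtain rfl : m = m' := by
      by_contra h
      simp [h] at hm'
    by_contra hc
    push Not at hc
    apply hd
    intro i
    have := hc i
    constructor
    · intro h
      simp only [h, if_true]
      have := this h
      omega
    · intro h
      simp [h]

lemma Eb_smul (ha : isOm a) (he : ∀ i, e i = if a i = -1 then 1 else 0)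
    (h2 : ∀ t u r, ι t r = ι (t + u) (MvPolynomial.monomial (u • e) 1 * r))
    (h3 : ∀ t r, ι t r = 0 ↔ ∀ m, MvPolynomial.coeff m r ≠ 0 → ∃ i, a i = -1 ∧ t ≤ m i)
    (d : Fin n → ℤ) (hd : Dg a d) (p : Fin n →₀ ℕ) :
    (MvPolynomial.monomial p (1 : k)) • Eb a ι d = Eb a ι (fun i => d i + p i) := by
  rw [Eb_eq ha he h2 d hd (t0 d), ← map_smul, smul_eq_mul, MvPolynomial.monomial_mul, one_mul,
    Eb_mon ha he h2 h3]
  · congr 1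
    ext i
    have h1 := le_t0 d i
    have := hd i
    rcases ha i with h | h <;> simp [h, toMon_apply] at * <;> omega
  · intro i _
    have := le_t0 d i
    omega

lemma Eb_indep (ha : isOm a) (he : ∀ i, e i = if a i = -1 then 1 else 0)
    (h2 : ∀ t u r, ι t r = ι (t + u) (MvPolynomial.monomial (u • e) 1 * r))
    (h3 : ∀ t r, ι t r = 0 ↔ ∀ m, MvPolynomial.coeff m r ≠ 0 → ∃ i, a i = -1 ∧ t ≤ m i) :
    LinearIndependent k (fun d : {d // Dg a d} => Eb a ι d.1) := by
  classical
  rw [linearIndependent_iff']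
  intro s c hs d0 hd0
  let t : ℕ := ∑ d ∈ s, t0 d.1
  have ht : ∀ d ∈ s, ∀ i, 0 ≤ d.1 i + t := fun d hd i => by
    have h1 := le_t0 d.1 i
    have : t0 d.1 ≤ t :=
      Finset.single_le_sum (f := fun d : {d // Dg a d} => t0 d.1) (fun _ _ => Nat.zero_le _) hd
    omega
  have e1 : ι t (∑ d ∈ s, c d • MvPolynomial.monomial (toMon a t d.1) 1) = 0 := by
    rw [map_sum, ← hs]
    refine Finset.sum_congr rfl fun d hd => ?_
    rw [LinearMap.map_smul_of_tower, Eb_eq ha he h2 d.1 d.2 t fun i _ => ht d hd i]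
  rw [h3] at e1
  by_contra hc
  obtain ⟨i, hi, h⟩ := e1 (toMon a t d0.1) (by
    rw [MvPolynomial.coeff_sum, Finset.sum_eq_single d0]
    · simpa using hc
    · intro d hd hne
      rw [MvPolynomial.coeff_smul, MvPolynomial.coeff_monomial, if_neg, smul_zero]
      intro heq
      apply hne
      ext i
      have h1 := DFunLike.congr_fun heq i
      rw [toMon_apply, toMon_apply] at h1
      have h2 := d.2 i
      have h3 := d0.2 i
      have h4 := ht d hd i
      have h5 := ht d0 hd0 i
      rcases ha i with h | h <;> simp [h] at * <;> omega
    · intro h; exact absurd hd0 h)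
  rw [toMon_apply] at h
  have := (d0.2 i).1 hi
  have := ht d0 hd0 i
  simp [hi] at h
  omega

lemma Eb_span (ha : isOm a) (he : ∀ i, e i = if a i = -1 then 1 else 0)
    (h1 : ∀ m, ∃ t r, ι t r = m)
    (h2 : ∀ t u r, ι t r = ι (t + u) (MvPolynomial.monomial (u • e) 1 * r))
    (h3 : ∀ t r, ι t r = 0 ↔ ∀ m, MvPolynomial.coeff m r ≠ 0 → ∃ i, a i = -1 ∧ t ≤ m i) :
    ∀ m, m ∈ Submodule.span k (Set.range (Eb a ι)) := by
  intro m
  obtain ⟨t, r, rfl⟩ := h1 m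
  induction r using MvPolynomial.induction_on' with
  | monomial u c =>
    have : MvPolynomial.monomial u c = c • MvPolynomial.monomial u (1 : k) := by
      rw [MvPolynomial.smul_monomial, smul_eq_mul, mul_one]
    rw [this, LinearMap.map_smul_of_tower, Eb_mon ha he h2 h3]
    exact Submodule.smul_mem _ _ (Submodule.subset_span ⟨_, rfl⟩)
  | add p q hp hq =>
    rw [map_add]
    exact add_mem hp hq

end PolySide

namespace PolySide

section Final

variable {n : ℕ} {k : Type} [Field k] {M : Type} [AddCommGroup M]
  [Module (MvPolynomial (Fin n) k) M] [Module k M] [IsScalarTower k (MvPolynomial (Fin n) k) M]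

lemma smul_comm_kA (c : k) (p : MvPolynomial (Fin n) k) (m : M) : p • c • m = c • p • m := by
  rw [← algebraMap_smul (MvPolynomial (Fin n) k) c m, smul_smul, mul_comm, ← smul_smul,
    algebraMap_smul]

variable {a : Fin n → ℤ} {E : (Fin n → ℤ) → M}

lemma g_internal (h0 : ∀ d, ¬ Dg a d → E d = 0)
    (hli : LinearIndependent k (fun d : {d // Dg a d} => E d.1))
    (hsp : ∀ m, m ∈ Submodule.span k (Set.range E)) :
    DirectSum.IsInternal (fun d => Submodule.span k {E d}) := by
  apply DirectSum.isInternal_submodule_of_iSupIndep_of_iSup_eq_top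
  · rw [← iSupIndep_ne_bot]
    have h : ∀ d : {d // Submodule.span k {E d} ≠ ⊥}, Dg a d.1 := fun d => by
      by_contra hc
      apply d.2
      rw [h0 _ hc, Submodule.span_zero_singleton]
    have key := (hli.iSupIndep_span_singleton).comp
      (f := fun d : {d // Submodule.span k {E d} ≠ ⊥} => (⟨d.1, h d⟩ : {d // Dg a d}))
      (fun x y hxy => Subtype.ext (congrArg (fun z : {d // Dg a d} => z.1) hxy))
    exact key
  · rw [← Submodule.span_range_eq_iSup, eq_top_iff]
    exact fun m _ => hsp m

lemma g_compat (h0 : ∀ d, ¬ Dg a d → E d = 0)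
    (hsm : ∀ d, Dg a d → ∀ p : Fin n →₀ ℕ,
      (MvPolynomial.monomial p (1 : k)) • E d = E (fun i => d i + p i)) :
    GradingCompat k M (fun d => Submodule.span k {E d}) := by
  intro i d m hm
  obtain ⟨c, rfl⟩ := Submodule.mem_span_singleton.1 hm
  rw [smul_comm_kA]
  apply Submodule.smul_mem
  by_cases hd : Dg a d
  · rw [MvPolynomial.X, hsm d hd]
    have : (fun j => d j + ((Finsupp.single i 1 : Fin n →₀ ℕ) j : ℤ)) = d + Pi.single i 1 := by
      ext j
      by_cases h : i = j
      · subst h; simp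
      · simp [Finsupp.single_apply, Pi.single_apply, h, Ne.symm h]
    rw [this]
    exact Submodule.mem_span_singleton_self _
  · rw [h0 d hd, smul_zero]
    exact zero_mem _

lemma g_finrank (h0 : ∀ d, ¬ Dg a d → E d = 0)
    (hli : LinearIndependent k (fun d : {d // Dg a d} => E d.1)) (d : Fin n → ℤ) :
    Module.finrank k (Submodule.span k {E d}) =
      if (∀ i, (a i = -1 → d i < 0) ∧ (a i = 0 → 0 ≤ d i)) then 1 else 0 := by
  split_ifs with h
  · exact finrank_span_singleton (hli.ne_zero ⟨d, h⟩)
  · rw [h0 d h, Submodule.span_zero_singleton, finrank_bot]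

lemma Dg_self (ha : isOm a) : Dg a a := fun i => ⟨fun h => by omega, fun h => by omega⟩

lemma inj_aux (ha : isOm a) (h0 : ∀ d, ¬ Dg a d → E d = 0)
    (hsm : ∀ d, Dg a d → ∀ p : Fin n →₀ ℕ,
      (MvPolynomial.monomial p (1 : k)) • E d = E (fun i => d i + p i))
    (hli : LinearIndependent k (fun d : {d // Dg a d} => E d.1))
    (hsp : ∀ m, m ∈ Submodule.span k (Set.range E)) (k₁ k₂ : ℕ)
    (f : (Fin k₁ → M) →ₗ[MvPolynomial (Fin n) k] (Fin k₂ → M))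
    (hf : ∀ d : Fin n → ℤ, ∀ v, (∀ t, v t ∈ Submodule.span k {E d}) →
      ∀ t, f v t ∈ Submodule.span k {E d})
    (hfa : ∀ v, (∀ t, v t ∈ Submodule.span k {E a}) → f v = 0) : f = 0 := by
  classical
  have hsingle : ∀ d s t, (Pi.single s (E d) : Fin k₁ → M) t ∈ Submodule.span k {E d} := by
    intro d s t
    by_cases h : t = s
    · subst h; rw [Pi.single_eq_same]; exact Submodule.mem_span_singleton_self _
    · rw [Pi.single_eq_of_ne h]; exact zero_mem _
  have hps : ∀ (p : MvPolynomial (Fin n) k) (s : Fin k₁) (m : M),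
      (Pi.single s (p • m) : Fin k₁ → M) = p • Pi.single s m := by
    intro p s m
    exact Pi.single_smul (f := fun _ => M) s p m
  -- vanishing in the degrees below `a`
  have c1 : ∀ (d : Fin n → ℤ), Dg a d → (∀ i, a i = 0 → d i = 0) → ∀ s,
      f (Pi.single s (E d)) = 0 := by
    intro d hd hd0 s
    ext t
    obtain ⟨c, hc⟩ := Submodule.mem_span_singleton.1 (hf d _ (hsingle d s) t)
    let p : Fin n →₀ ℕ := Finsupp.equivFunOnFinite.symm fun i => (a i - d i).toNat
    have hp : (MvPolynomial.monomial p (1 : k)) • E d = E a := by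
      rw [hsm d hd p]
      congr 1
      ext i
      change d i + ((a i - d i).toNat : ℤ) = a i
      have := hd i
      have := hd0 i
      rcases ha i with h | h <;> simp [h] at * <;> omega
    have e1 : f (Pi.single s (E a)) t = c • E a := by
      rw [← hp, hps, map_smul, Pi.smul_apply, ← hc, smul_comm_kA]
    rw [hfa _ (hsingle a s), Pi.zero_apply] at e1
    have hEa : E a ≠ 0 := hli.ne_zero ⟨a, Dg_self ha⟩
    have hc0 : c = 0 := (smul_eq_zero.1 e1.symm).resolve_right hEa
    rw [← hc, hc0, zero_smul, Pi.zero_apply]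
  have c2 : ∀ (d : Fin n → ℤ), ∀ s, f (Pi.single s (E d)) = 0 := by
    intro d s
    by_cases hd : Dg a d
    · let d' : Fin n → ℤ := fun i => if a i = -1 then d i else 0
      have hd' : Dg a d' := by
        intro i
        have := hd i
        rcases ha i with h | h <;> simp [h, d'] at * <;> omega
      let q : Fin n →₀ ℕ := Finsupp.equivFunOnFinite.symm fun i => (d i - d' i).toNat
      have hq : (MvPolynomial.monomial q (1 : k)) • E d' = E d := by
        rw [hsm d' hd' q]
        congr 1
        ext i
        change d' i + ((d i - d' i).toNat : ℤ) = d i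
        have := hd i
        rcases ha i with h | h <;> simp [h, d'] at * <;> omega
      rw [← hq, hps, map_smul, c1 d' hd' (fun i hi => by simp [d', hi]), smul_zero]
    · rw [h0 d hd, Pi.single_zero, map_zero]
  have c3 : ∀ m s, f (Pi.single s m) = 0 := by
    intro m s
    refine Submodule.span_induction (p := fun m _ => f (Pi.single s m) = 0) ?_ ?_ ?_ ?_ (hsp m)
    · rintro _ ⟨d, rfl⟩; exact c2 d s
    · rw [Pi.single_zero, map_zero]
    · intro x y _ _ hx hy
      rw [Pi.single_add, map_add, hx, hy, add_zero]
    · intro c x _ hx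
      rw [← algebraMap_smul (MvPolynomial (Fin n) k) c x, hps, map_smul, hx, smul_zero]
  apply LinearMap.pi_ext
  intro s m
  rw [c3, LinearMap.zero_apply]

lemma surj_aux (k₁ k₂ : ℕ)
    (φ : ↥(Submodule.pi Set.univ fun _ : Fin k₁ => Submodule.span k {E a})
          →ₗ[k] ↥(Submodule.pi Set.univ fun _ : Fin k₂ => Submodule.span k {E a})) :
    ∃ f : (Fin k₁ → M) →ₗ[MvPolynomial (Fin n) k] (Fin k₂ → M),
      (∀ d : Fin n → ℤ, ∀ v, (∀ t, v t ∈ Submodule.span k {E d}) →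
        ∀ t, f v t ∈ Submodule.span k {E d}) ∧
      ∀ v (hv : v ∈ Submodule.pi Set.univ fun _ : Fin k₁ => Submodule.span k {E a}),
        f v = (φ ⟨v, hv⟩ : Fin k₂ → M) := by
  classical
  have hsingle : ∀ s, (Pi.single s (E a) : Fin k₁ → M) ∈
      Submodule.pi Set.univ fun _ : Fin k₁ => Submodule.span k {E a} := by
    intro s t _
    by_cases h : t = s
    · subst h; rw [Pi.single_eq_same]; exact Submodule.mem_span_singleton_self _
    · rw [Pi.single_eq_of_ne h]; exact zero_mem _
  have hc : ∀ t s, ∃ c : k, c • E a = (φ ⟨_, hsingle s⟩ : Fin k₂ → M) t := fun t s =>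
    Submodule.mem_span_singleton.1 ((φ ⟨_, hsingle s⟩).2 t (Set.mem_univ t))
  choose c hc using hc
  let f : (Fin k₁ → M) →ₗ[MvPolynomial (Fin n) k] (Fin k₂ → M) :=
    LinearMap.pi fun t => ∑ s, (algebraMap k (MvPolynomial (Fin n) k) (c t s)) • LinearMap.proj s
  have hf : ∀ v t, f v t = ∑ s, c t s • v s := by
    intro v t
    change (∑ s, (algebraMap k (MvPolynomial (Fin n) k) (c t s)) •
      (LinearMap.proj s : (Fin k₁ → M) →ₗ[MvPolynomial (Fin n) k] M)) v = _
    rw [LinearMap.sum_apply]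
    exact Finset.sum_congr rfl fun s _ => algebraMap_smul (MvPolynomial (Fin n) k) (c t s) (v s)
  refine ⟨f, ?_, ?_⟩
  · intro d v hv t
    rw [hf]
    exact Submodule.sum_mem _ fun s _ => Submodule.smul_mem _ _ (hv s)
  · intro v hv
    have hb : ∀ s, ∃ b : k, b • E a = v s := fun s =>
      Submodule.mem_span_singleton.1 (hv s (Set.mem_univ s))
    choose b hb using hb
    have hv2 : (⟨v, hv⟩ : ↥(Submodule.pi Set.univ fun _ : Fin k₁ => Submodule.span k {E a})) =
        ∑ s, b s • ⟨_, hsingle s⟩ := by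
      apply Subtype.ext
      rw [Submodule.coe_sum]
      ext t
      rw [Finset.sum_apply, Finset.sum_eq_single t]
      · simp [hb]
      · intro s _ hs
        simp [Pi.single_eq_of_ne hs.symm]
      · simp
    ext t
    rw [hv2, map_sum, Submodule.coe_sum, Finset.sum_apply, hf]
    refine Finset.sum_congr rfl fun s _ => ?_
    rw [map_smul, Submodule.coe_smul, Pi.smul_apply, ← hc, ← hb, smul_smul, smul_smul, mul_comm]

end Final

end PolySide

/-- Linearization: for `M₁ = H^l_{p_a}(R)^{⊕k₁}`, `M₂ = H^l_{p_a}(R)^{⊕k₂}`, restriction of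
`ℤⁿ`-graded `R`-module homomorphisms `M₁ → M₂` to the degree-`a` components is a bijection
onto the `k`-linear maps `(M₁)_a → (M₂)_a`, and these restrictions are compatible with
composition (in particular composites of graded maps are graded). -/
theorem stmt_5 (n : ℕ) (k : Type) [Field k] (a : Fin n → ℤ) (ha : isOm a) (k₁ k₂ k₃ : ℕ)
    [Module k (LC k (faceIdeal k a) (wt a))]
    [IsScalarTower k (MvPolynomial (Fin n) k) (LC k (faceIdeal k a) (wt a))] :
    ∃ g : (Fin n → ℤ) → Submodule k (LC k (faceIdeal k a) (wt a)),
      DirectSum.IsInternal g ∧ GradingCompat k _ g ∧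
      (∀ d : Fin n → ℤ, Module.finrank k (g d) =
        if (∀ i, (a i = -1 → d i < 0) ∧ (a i = 0 → 0 ≤ d i)) then 1 else 0) ∧
      -- injectivity of the restriction map on graded homomorphisms
      (∀ f₁ f₂ : (Fin k₁ → LC k (faceIdeal k a) (wt a))
          →ₗ[MvPolynomial (Fin n) k] (Fin k₂ → LC k (faceIdeal k a) (wt a)),
        (∀ d : Fin n → ℤ, ∀ v, (∀ t, v t ∈ g d) → ∀ t, f₁ v t ∈ g d) →
        (∀ d : Fin n → ℤ, ∀ v, (∀ t, v t ∈ g d) → ∀ t, f₂ v t ∈ g d) →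
        (∀ v, (∀ t, v t ∈ g a) → f₁ v = f₂ v) → f₁ = f₂) ∧
      -- surjectivity: every `k`-linear map between the degree-`a` components
      -- is the restriction of a graded homomorphism
      (∀ φ : ↥(Submodule.pi Set.univ fun _ : Fin k₁ => g a)
          →ₗ[k] ↥(Submodule.pi Set.univ fun _ : Fin k₂ => g a),
        ∃ f : (Fin k₁ → LC k (faceIdeal k a) (wt a))
            →ₗ[MvPolynomial (Fin n) k] (Fin k₂ → LC k (faceIdeal k a) (wt a)),
          (∀ d : Fin n → ℤ, ∀ v, (∀ t, v t ∈ g d) → ∀ t, f v t ∈ g d) ∧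
          ∀ v (hv : v ∈ Submodule.pi Set.univ fun _ : Fin k₁ => g a),
            f v = (φ ⟨v, hv⟩ : Fin k₂ → LC k (faceIdeal k a) (wt a))) ∧
      -- compatibility with composition: composites of graded maps are graded
      (∀ (f : (Fin k₁ → LC k (faceIdeal k a) (wt a))
            →ₗ[MvPolynomial (Fin n) k] (Fin k₂ → LC k (faceIdeal k a) (wt a)))
         (f' : (Fin k₂ → LC k (faceIdeal k a) (wt a))
            →ₗ[MvPolynomial (Fin n) k] (Fin k₃ → LC k (faceIdeal k a) (wt a))),
        (∀ d : Fin n → ℤ, ∀ v, (∀ t, v t ∈ g d) → ∀ t, f v t ∈ g d) →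
        (∀ d : Fin n → ℤ, ∀ v, (∀ t, v t ∈ g d) → ∀ t, f' v t ∈ g d) →
        (∀ d : Fin n → ℤ, ∀ v, (∀ t, v t ∈ g d) → ∀ t, (f'.comp f) v t ∈ g d)) := by
  obtain ⟨ι, e, he, h1, h2, h3⟩ := PolySide.lc_poly (k := k) a
  have h0 : ∀ d, ¬ PolySide.Dg a d → PolySide.Eb a ι d = 0 := fun d hd => if_neg hd
  have hsm := PolySide.Eb_smul ha he h2 h3
  have hli := PolySide.Eb_indep ha he h2 h3
  have hsp := PolySide.Eb_span ha he h1 h2 h3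
  refine ⟨fun d => Submodule.span k {PolySide.Eb a ι d}, PolySide.g_internal h0 hli hsp,
    PolySide.g_compat h0 hsm, PolySide.g_finrank h0 hli, ?_, ?_, ?_⟩
  · intro f₁ f₂ hf₁ hf₂ h
    refine sub_eq_zero.1 (PolySide.inj_aux ha h0 hsm hli hsp k₁ k₂ (f₁ - f₂) ?_ ?_)
    · intro d v hv t
      exact sub_mem (hf₁ d v hv t) (hf₂ d v hv t)
    · intro v hv
      rw [LinearMap.sub_apply, h v hv, sub_self]
  · intro φ
    exact PolySide.surj_aux k₁ k₂ φ
  · intro f f' hf hf' d v hv t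
    exact hf' d _ (hf d v hv) t
end
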